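/- arXiv:math/0010020 — 2 statements merged into one kernel-verified Lean document; each statement's English description precedes it below -/
import Mathlib

section
/- Let z_o be a 6-vector of the rank-10 𝒪-lattice Λ = Λ′ ⊥ Λ″ ⊥ H_𝒪 and let Λ_o := {x ∈ Λ : ψ(x, z_o) = 0} be its orthogonal complement, an 𝒪-lattice of rank 9 with the restricted form. Then the restriction homomorphism from the stabilizer {g ∈ U(Λ) : g(Λ_o) = Λ_o} to the unitary group U(Λ_o) is a group isomorphism; in particular, every ψ-unitary 𝒪-module automorphism of Λ_o extends uniquely to a ψ-unitary automorphism of Λ. -/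
open Polynomial

noncomputable section

/-- The Eisenstein ring `𝒪 = ℤ[ω]`, where `ω = e^{2πi/6}` is a primitive sixth root of
unity (so `ω² - ω + 1 = 0`), presented as `ℤ[X]/(X² - X + 1)`. -/
abbrev O : Type := AdjoinRoot (X ^ 2 - X + 1 : ℤ[X])

/-- `ω`, the distinguished primitive sixth root of unity in `𝒪`. -/
def ω : O := AdjoinRoot.root _

lemma ω_sq : ω ^ 2 - ω + 1 = 0 := by
  have h := AdjoinRoot.eval₂_root (X ^ 2 - X + 1 : ℤ[X])
  simpa [ω, eval₂_add, eval₂_sub, eval₂_pow, eval₂_X, eval₂_one] using h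

/-- Complex conjugation on the Eisenstein ring: the ring involution with
`conj ω = 1 - ω = ω⁻¹`. -/
def conj : O →+* O :=
  AdjoinRoot.lift (algebraMap ℤ O) (1 - ω) (by
    have h := ω_sq
    simp only [eval₂_add, eval₂_sub, eval₂_pow, eval₂_X, eval₂_one]
    ring_nf
    ring_nf at h
    linear_combination h)

/-- `θ := ω - ω⁻¹ = ω - conj ω = 2ω - 1`, a square root of `-3` in `𝒪`. -/
def θ : O := ω - conj ω

/-- The rank-10 𝒪-lattice `Λ = Λ′ ⊥ Λ″ ⊥ H_𝒪`, modelled on `Fin 10 → 𝒪`.  The basis is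
`(r₁′, …, r₄′, r₁″, …, r₄″, e, f)` (coordinates `0–3`, `4–7`, `8`, `9`).  This is the Gram
matrix: on each copy of `Λ⁴` (coordinates `0–3` and `4–7`) we have `ψ(rᵢ,rᵢ) = 3`,
`ψ(rᵢ,rᵢ₊₁) = θ`, `ψ(rᵢ,rⱼ) = 0` for `j > i+1`; the two copies and `H_𝒪` are mutually
orthogonal; and on `H_𝒪` we have `ψ(e,e) = ψ(f,f) = 0`, `ψ(e,f) = θ`, `ψ(f,e) = −θ`. -/
def gram10 : Fin 10 → Fin 10 → O := fun i j =>
  if (i : ℕ) < 8 ∧ (j : ℕ) < 8 then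
    (if (i : ℕ) / 4 = (j : ℕ) / 4 then
      (if i = j then 3
       else if (i : ℕ) + 1 = (j : ℕ) then θ
       else if (j : ℕ) + 1 = (i : ℕ) then conj θ
       else 0)
     else 0)
  else if (i : ℕ) = 8 ∧ (j : ℕ) = 9 then θ
  else if (i : ℕ) = 9 ∧ (j : ℕ) = 8 then -θ
  else 0

/-- The Hermitian form of `Λ`: 𝒪-linear in the first variable, conjugate-linear in the
second; it has hyperbolic signature `(9,1)`. -/
def psi10 (x y : Fin 10 → O) : O :=
  ∑ i : Fin 10, ∑ j : Fin 10, x i * conj (y j) * gram10 i j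

/-- `g` belongs to the unitary group `U(Λ)`. -/
def IsUnitary10 (g : (Fin 10 → O) ≃ₗ[O] (Fin 10 → O)) : Prop :=
  ∀ x y, psi10 (g x) (g y) = psi10 x y

/-- The `i`-th basis vector of `Λ` (so `b 0, …, b 3` are `r₁′, …, r₄′`;
`b 4, …, b 7` are `r₁″, …, r₄″`; `b 8 = e` and `b 9 = f`). -/
def b (i : Fin 10) : Fin 10 → O := Pi.single i 1

/-- `x ∈ Λ` is primitive: `x ∉ λΛ` for every non-unit `λ ∈ 𝒪`. -/
def IsPrimVec (x : Fin 10 → O) : Prop :=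
  ∀ a : O, (∃ y : Fin 10 → O, x = a • y) → IsUnit a

/-- The Hermitian form paired against a fixed second argument, as an 𝒪-linear map. -/
def psiLin (z : Fin 10 → O) : (Fin 10 → O) →ₗ[O] O where
  toFun x := psi10 x z
  map_add' x y := by
    simp [psi10, add_mul, Finset.sum_add_distrib]
  map_smul' a x := by
    simp [psi10, smul_eq_mul, mul_assoc, Finset.mul_sum]

/-- `Λ_o`, the orthogonal complement `{x ∈ Λ : ψ(x, z_o) = 0}` of `z_o` in `Λ`. -/
def Λo (zo : Fin 10 → O) : Submodule O (Fin 10 → O) := LinearMap.ker (psiLin zo)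

/-!
To extend `h ∈ U(Λ_o)`, one must choose the image `εz` of `z = z_o`, where `ε` is a unit, and check
that the isometry `h ⊥ ε` of `Λ_o ⊥ 𝒪z` preserves `Λ`. Since `θ⁻¹ψ` is unimodular and `6`-vectors
are primitive, there is a `w` with `ψ(w, z) = θ`. Set `u := 2θw + z ∈ Λ_o`. The vectors of `Λ_o`
whose products with `Λ_o` are all divisible by `6` are exactly those in `𝒪u + 2θΛ_o`. This submodule
is therefore preserved by `h`, so `h(u) = au + 2θv` with `a` invertible modulo `2θ`. The six units
of `𝒪` map bijectively onto those of `𝒪/2θ`, so `a` may be replaced by a unique unit `ε`, and then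
`h ⊥ ε` maps `w = (u - z)/2θ` into `Λ`. The same congruence forces this choice of `ε`.
-/

/-! ### Eisenstein integers -/

namespace O

instance : IsDomain O := by
  refine AdjoinRoot.isDomain_of_prime (Irreducible.prime ?_)
  rw [← cyclotomic_six]
  exact cyclotomic.irreducible (by decide)

lemma conj_ω : conj ω = 1 - ω := by
  simp [conj, ω]

lemma θ_eq : θ = 2 * ω - 1 := by
  rw [θ, conj_ω]
  ring

lemma θ_mul_θ : θ * θ = -3 := by
  rw [θ_eq]
  linear_combination 4 * ω_sq

lemma six_eq : (6 : O) = -(2 * θ) * θ := by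
  linear_combination 2 * θ_mul_θ

/-- The presentation of `𝒪` as pairs `m + nω` with `ω² = -1 + ω`, which gives coordinates and
makes the library's norm form of quadratic algebras available. -/
def quadraticAlgebraEquiv : QuadraticAlgebra ℤ (-1) 1 ≃ₐ[ℤ] O :=
  AlgEquiv.ofAlgHom
    (QuadraticAlgebra.lift ⟨ω, by simp only [neg_smul, one_smul]; linear_combination ω_sq⟩)
    (AdjoinRoot.liftAlgHom _ (Algebra.ofId ℤ _) QuadraticAlgebra.omega (by
      simp only [eval₂_add, eval₂_sub, eval₂_pow, eval₂_X, eval₂_one]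
      ext <;> simp [pow_two, QuadraticAlgebra.re_one, QuadraticAlgebra.im_one]))
    (AdjoinRoot.algHom_ext (by simp [ω]))
    (QuadraticAlgebra.algHom_ext (by simp [ω]))

lemma quadraticAlgebraEquiv_mk (m n : ℤ) : quadraticAlgebraEquiv ⟨m, n⟩ = m + n * ω := by
  simp [quadraticAlgebraEquiv]

lemma exists_eq_intCast_add_intCast_mul_ω (a : O) : ∃ m n : ℤ, a = m + n * ω := by
  obtain ⟨⟨m, n⟩, rfl⟩ := quadraticAlgebraEquiv.surjective a
  exact ⟨m, n, quadraticAlgebraEquiv_mk m n⟩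

lemma conj_conj (a : O) : conj (conj a) = a := by
  obtain ⟨m, n, rfl⟩ := exists_eq_intCast_add_intCast_mul_ω a
  simp [conj_ω]

lemma conj_θ : conj θ = -θ := by
  rw [θ, map_sub, conj_conj, neg_sub]

lemma conj_two_mul_θ : conj (2 * θ) = -(2 * θ) := by
  rw [map_mul, map_ofNat, conj_θ, mul_neg]

lemma norm_intCast_add_intCast_mul_ω (m n : ℤ) :
    Algebra.norm ℤ (m + n * ω : O) = m ^ 2 + m * n + n ^ 2 := by
  rw [← quadraticAlgebraEquiv_mk, Algebra.norm_eq_of_algEquiv]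
  have h := QuadraticAlgebra.det_toLinearMap_eq_norm (⟨m, n⟩ : QuadraticAlgebra ℤ (-1) 1)
  rw [QuadraticAlgebra.norm_def] at h
  simp only at h
  calc Algebra.norm ℤ (⟨m, n⟩ : QuadraticAlgebra ℤ (-1) 1) = _ := h
    _ = _ := by ring

lemma norm_intCast (m : ℤ) : Algebra.norm ℤ (m : O) = m ^ 2 := by
  simpa using norm_intCast_add_intCast_mul_ω m 0

lemma norm_two : Algebra.norm ℤ (2 : O) = 4 := by
  simpa using norm_intCast 2

lemma norm_θ : Algebra.norm ℤ θ = 3 := by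
  have h := norm_intCast_add_intCast_mul_ω (-1) 2
  rwa [show ((-1 : ℤ) + (2 : ℤ) * ω : O) = θ by rw [θ_eq]; push_cast; ring] at h

lemma norm_two_mul_θ : Algebra.norm ℤ (2 * θ) = 12 := by
  rw [map_mul, norm_two, norm_θ]
  rfl

lemma mul_conj (a : O) : a * conj a = (Algebra.norm ℤ a : O) := by
  obtain ⟨m, n, rfl⟩ := exists_eq_intCast_add_intCast_mul_ω a
  rw [norm_intCast_add_intCast_mul_ω]
  simp only [map_add, map_mul, map_intCast, conj_ω]
  push_cast
  linear_combination -(n : O) ^ 2 * ω_sq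

lemma norm_conj (a : O) : Algebra.norm ℤ (conj a) = Algebra.norm ℤ a := by
  obtain ⟨m, n, rfl⟩ := exists_eq_intCast_add_intCast_mul_ω a
  have h : conj (m + n * ω) = ((m + n : ℤ) : O) + ((-n : ℤ) : O) * ω := by
    simp only [map_add, map_mul, map_intCast, conj_ω]
    push_cast
    ring
  rw [h, norm_intCast_add_intCast_mul_ω, norm_intCast_add_intCast_mul_ω]
  ring

lemma norm_nonneg (a : O) : 0 ≤ Algebra.norm ℤ a := by
  obtain ⟨m, n, rfl⟩ := exists_eq_intCast_add_intCast_mul_ω a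
  rw [norm_intCast_add_intCast_mul_ω]
  nlinarith [sq_nonneg (2 * m + n), sq_nonneg n]

lemma norm_eq_zero {a : O} : Algebra.norm ℤ a = 0 ↔ a = 0 := by
  constructor
  · intro h
    have h0 : a * conj a = 0 := by rw [mul_conj, h, Int.cast_zero]
    rcases mul_eq_zero.1 h0 with ha | ha
    · exact ha
    · rw [← conj_conj a, ha, map_zero]
  · rintro rfl
    simpa using norm_intCast 0

lemma mul_conj_eq_one_iff {a : O} : a * conj a = 1 ↔ Algebra.norm ℤ a = 1 := by
  refine ⟨fun h ↦ ?_, fun h ↦ by rw [mul_conj, h, Int.cast_one]⟩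
  have hsq := congrArg (Algebra.norm ℤ) h
  rw [map_mul, norm_conj, map_one] at hsq
  nlinarith [norm_nonneg a]

lemma norm_sub_add_norm_add (a c : O) :
    Algebra.norm ℤ (a - c) + Algebra.norm ℤ (a + c) =
      2 * (Algebra.norm ℤ a + Algebra.norm ℤ c) := by
  obtain ⟨m, n, rfl⟩ := exists_eq_intCast_add_intCast_mul_ω a
  obtain ⟨p, q, rfl⟩ := exists_eq_intCast_add_intCast_mul_ω c
  have hsub : (m + n * ω - (p + q * ω) : O) = ((m - p : ℤ) : O) + ((n - q : ℤ) : O) * ω := by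
    push_cast
    ring
  have hadd : (m + n * ω + (p + q * ω) : O) = ((m + p : ℤ) : O) + ((n + q : ℤ) : O) * ω := by
    push_cast
    ring
  rw [hsub, hadd]
  simp only [norm_intCast_add_intCast_mul_ω]
  ring

lemma two_dvd_of_two_dvd_norm {a : O} (ha : 2 ∣ Algebra.norm ℤ a) : 2 ∣ a := by
  obtain ⟨m, n, rfl⟩ := exists_eq_intCast_add_intCast_mul_ω a
  rw [norm_intCast_add_intCast_mul_ω, ← even_iff_two_dvd] at ha
  have hmn : Even m ∧ Even n := by
    simp only [Int.even_add, Int.even_mul, Int.even_pow] at ha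
    tauto
  obtain ⟨⟨i, rfl⟩, j, rfl⟩ := hmn
  exact ⟨i + j * ω, by push_cast; ring⟩

lemma θ_dvd_of_three_dvd_norm {a : O} (ha : 3 ∣ Algebra.norm ℤ a) : θ ∣ a := by
  obtain ⟨m, n, rfl⟩ := exists_eq_intCast_add_intCast_mul_ω a
  rw [norm_intCast_add_intCast_mul_ω] at ha
  have hsq : 3 ∣ (m - n) ^ 2 := by
    rw [show (m - n) ^ 2 = m ^ 2 + m * n + n ^ 2 - 3 * (m * n) by ring]
    exact dvd_sub ha (dvd_mul_right 3 (m * n))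
  obtain ⟨k, hk⟩ := Int.prime_three.dvd_of_dvd_pow hsq
  obtain rfl : m = n + 3 * k := by linarith
  refine ⟨-θ * k + n * (1 - ω), ?_⟩
  rw [θ_eq]
  push_cast
  linear_combination (4 * k + 2 * n : O) * ω_sq

end O

lemma three_mul_hexagonal_le_of_mem_triangle {R : Type*} [CommRing R] [LinearOrder R]
    [IsStrictOrderedRing R] {n x y : R} (hx : 0 ≤ x) (hy : 0 ≤ y) (hxy : x + y ≤ n) :
    3 * (x ^ 2 + x * y + y ^ 2) ≤ n ^ 2 ∨
      3 * ((x - n) ^ 2 + (x - n) * y + y ^ 2) ≤ n ^ 2 ∨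
      3 * (x ^ 2 + x * (y - n) + (y - n) ^ 2) ≤ n ^ 2 := by
  by_contra! h
  obtain ⟨h₀, h₁, h₂⟩ := h
  have hn : 0 < n := by
    by_contra! hn
    obtain rfl : x = 0 := by linarith
    obtain rfl : y = 0 := by linarith
    nlinarith
  -- The barycentric coordinates of `(x, y)` average its squared distances to the vertices.
  have hlt : n * n ^ 2 < (n - x - y) * (3 * (x ^ 2 + x * y + y ^ 2)) +
      x * (3 * ((x - n) ^ 2 + (x - n) * y + y ^ 2)) +
      y * (3 * (x ^ 2 + x * (y - n) + (y - n) ^ 2)) := by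
    rcases hxy.eq_or_lt with rfl | _
    · rcases hx.eq_or_lt with rfl | _ <;> nlinarith
    · nlinarith
  have hle : n * (3 * (x * y + (n - x - y) * (x + y))) ≤ n * n ^ 2 := by
    gcongr
    nlinarith [sq_nonneg (2 * x + y - n), sq_nonneg (3 * y - n)]
  linarith

lemma exists_three_mul_hexagonal_sub_mul_le {n : ℤ} (hn : 0 < n) (A B : ℤ) :
    ∃ p q : ℤ, 3 * ((A - n * p) ^ 2 + (A - n * p) * (B - n * q) + (B - n * q) ^ 2) ≤ n ^ 2 := by
  have hA : A = n * (A / n) + A % n := (Int.mul_ediv_add_emod A n).symm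
  have hB : B = n * (B / n) + B % n := (Int.mul_ediv_add_emod B n).symm
  have hx₀ := Int.emod_nonneg A hn.ne'
  have hy₀ := Int.emod_nonneg B hn.ne'
  have hx₁ := Int.emod_lt_of_pos A hn
  have hy₁ := Int.emod_lt_of_pos B hn
  generalize A / n = i, A % n = x, B / n = j, B % n = y at *
  subst hA hB
  rcases le_total (x + y) n with hxy | hxy
  · rcases three_mul_hexagonal_le_of_mem_triangle hx₀ hy₀ hxy with h | h | h
    · exact ⟨i, j, by linear_combination h⟩
    · exact ⟨i + 1, j, by linear_combination h⟩
    · exact ⟨i, j + 1, by linear_combination h⟩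
  · rcases three_mul_hexagonal_le_of_mem_triangle (sub_nonneg.2 hx₁.le) (sub_nonneg.2 hy₁.le)
      (show n - x + (n - y) ≤ n by linarith) with h | h | h
    · exact ⟨i + 1, j + 1, by linear_combination h⟩
    · exact ⟨i, j + 1, by linear_combination h⟩
    · exact ⟨i + 1, j, by linear_combination h⟩

namespace O

lemma exists_three_mul_norm_sub_mul_le (a : O) {c : O} (hc : c ≠ 0) :
    ∃ q, 3 * Algebra.norm ℤ (a - c * q) ≤ Algebra.norm ℤ c := by
  have hpos : 0 < Algebra.norm ℤ c := (norm_nonneg c).lt_of_ne' (mt norm_eq_zero.1 hc)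
  obtain ⟨A, B, hAB⟩ := exists_eq_intCast_add_intCast_mul_ω (conj c * a)
  obtain ⟨p, q, hpq⟩ := exists_three_mul_hexagonal_sub_mul_le hpos A B
  have hmul : conj c * (a - c * (p + q * ω)) =
      ((A - Algebra.norm ℤ c * p : ℤ) : O) + ((B - Algebra.norm ℤ c * q : ℤ) : O) * ω := by
    push_cast
    rw [← mul_conj]
    linear_combination hAB
  have hnorm := congrArg (Algebra.norm ℤ) hmul
  rw [map_mul, norm_conj, norm_intCast_add_intCast_mul_ω] at hnorm
  refine ⟨p + q * ω, le_of_mul_le_mul_left ?_ hpos⟩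
  linarith

lemma not_isUnit_of_one_lt_norm {a : O} (ha : 1 < Algebra.norm ℤ a) : ¬IsUnit a := fun h ↦ by
  rcases Int.isUnit_iff.1 (h.map (Algebra.norm ℤ)) with h | h <;> omega

lemma θ_ne_zero : θ ≠ 0 := by
  rw [Ne, ← norm_eq_zero, norm_θ]
  norm_num

lemma two_mul_θ_ne_zero : 2 * θ ≠ 0 := by
  rw [Ne, ← norm_eq_zero, norm_two_mul_θ]
  norm_num

/-- Reduction modulo `2θ` maps the six units of `𝒪` onto the units of `𝒪/2θ`: a remainder
has norm at most `4` and prime to `6`, hence norm `1`. -/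
lemma exists_norm_eq_one_of_isCoprime_two_mul_θ {a : O} (ha : IsCoprime a (2 * θ)) :
    ∃ ε d, Algebra.norm ℤ ε = 1 ∧ a = ε + 2 * θ * d := by
  obtain ⟨q, hq⟩ := exists_three_mul_norm_sub_mul_le a two_mul_θ_ne_zero
  refine ⟨a - 2 * θ * q, q, ?_, by ring⟩
  have hcop : IsCoprime (a - 2 * θ * q) (2 * θ) := IsCoprime.sub_mul_left_left_iff.2 ha
  generalize a - 2 * θ * q = r at *
  rw [norm_two_mul_θ] at hq
  have h0 := norm_nonneg r
  have h2 : ¬2 ∣ Algebra.norm ℤ r := fun h ↦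
    not_isUnit_of_one_lt_norm (by simp [norm_two])
      (hcop.isUnit_of_dvd' (two_dvd_of_two_dvd_norm h) (dvd_mul_right 2 θ))
  have h3 : ¬3 ∣ Algebra.norm ℤ r := fun h ↦
    not_isUnit_of_one_lt_norm (by simp [norm_θ])
      (hcop.isUnit_of_dvd' (θ_dvd_of_three_dvd_norm h) (dvd_mul_left θ 2))
  omega

lemma eq_one_of_norm_eq_one_of_two_mul_θ_dvd {a : O} (ha : Algebra.norm ℤ a = 1)
    (hdvd : 2 * θ ∣ a - 1) : a = 1 := by
  obtain ⟨d, hd⟩ := hdvd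
  have hpar := norm_sub_add_norm_add a 1
  rw [hd, map_mul, norm_two_mul_θ, ha, map_one] at hpar
  have hd0 : d = 0 := by
    have := norm_nonneg d
    have := norm_nonneg (a + 1)
    exact norm_eq_zero.1 (by omega)
  rwa [hd0, mul_zero, sub_eq_zero] at hd

lemma dvd_norm_of_mem {p : ℤ} (hp : Prime p) {I : Ideal O} (hI : I ≠ ⊤) (hpI : (p : O) ∈ I)
    {a : O} (ha : a ∈ I) : p ∣ Algebra.norm ℤ a := by
  by_contra h
  obtain ⟨u, v, huv⟩ := hp.coprime_iff_not_dvd.2 h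
  refine hI (I.eq_top_iff_one.2 ?_)
  have hone : (u * p + v * (a * conj a) : O) = 1 := by
    rw [mul_conj]
    simpa using congrArg (Int.cast : ℤ → O) huv
  rw [← hone]
  exact I.add_mem (I.mul_mem_left _ hpI) (I.mul_mem_left _ (I.mul_mem_right _ ha))

end O

lemma exists_eq_smul_of_forall_exists {R M N : Type*} [CommSemiring R] [AddCommMonoid M]
    [AddCommMonoid N] [Module R M] [Module R N] {d : R} (hd : IsSMulRegular N d)
    (f : M →ₗ[R] N) (hf : ∀ x, ∃ y, f x = d • y) : ∃ g : M →ₗ[R] N, f = d • g := by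
  choose g hg using hf
  refine ⟨⟨⟨g, fun x y ↦ hd ?_⟩, fun a x ↦ hd ?_⟩, LinearMap.ext hg⟩
  · simp only [smul_add, ← hg, map_add]
  · simp only [RingHom.id_apply, smul_comm d a, ← hg, map_smul]

/-! ### `θ`-modular Hermitian forms -/

section Modular

open O

variable {M : Type*} [AddCommGroup M] [Module O M] {ψ : M →ₗ[O] M →ₛₗ[conj] O}

lemma apply_smul_smul (a c : O) (x y : M) : ψ (a • x) (c • y) = a * conj c * ψ x y := by
  rw [LinearMap.map_smul₂, (ψ x).map_smulₛₗ, smul_eq_mul, smul_eq_mul]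
  ring

/-- A `θ`-modular Hermitian form on an `𝒪`-module `M`: a Hermitian form with values in `θ𝒪`
for which `t ↦ θ⁻¹ψ(·, t)` is a bijection from `M` onto its dual. -/
structure IsθModular (ψ : M →ₗ[O] M →ₛₗ[conj] O) : Prop where
  conj_apply : ∀ x y, conj (ψ x y) = ψ y x
  θ_dvd_apply : ∀ x y, θ ∣ ψ x y
  existsUnique_apply_eq : ∀ φ : M →ₗ[O] O, ∃! t, ∀ x, ψ x t = θ * φ x

/-- The orthogonal complement `{x | ψ(x, z) = 0}` of the vector `z`. -/
def perp (ψ : M →ₗ[O] M →ₛₗ[conj] O) (z : M) : Submodule O M :=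
  LinearMap.ker (ψ.flip z)

lemma mem_perp {x z : M} : x ∈ perp ψ z ↔ ψ x z = 0 :=
  Iff.rfl

lemma sub_smul_mem_perp {x z w : M} (hw : ψ w z = θ) {k : O} (hx : ψ x z = θ * k) :
    x - k • w ∈ perp ψ z := by
  rw [mem_perp, LinearMap.map_sub₂, LinearMap.map_smul₂, hx, hw, smul_eq_mul, mul_comm, sub_self]

lemma smul_add_smul_mem_perp {x z : M} (hz : ψ z z = 6) {k : O} (hx : ψ x z = θ * k) :
    (2 * θ) • x + k • z ∈ perp ψ z := by
  rw [mem_perp, LinearMap.map_add₂, LinearMap.map_smul₂, LinearMap.map_smul₂, hx, hz,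
    smul_eq_mul, smul_eq_mul]
  linear_combination 2 * k * θ_mul_θ

namespace IsθModular

lemma eq_zero_of_forall_apply_eq_zero (hψ : IsθModular ψ) {t : M} (ht : ∀ x, ψ x t = 0) :
    t = 0 :=
  (hψ.existsUnique_apply_eq 0).unique (by simpa using ht) (by simp)

lemma isTorsionFree (hψ : IsθModular ψ) : Module.IsTorsionFree O M := by
  refine Module.isTorsionFree_iff_smul_eq_zero.2 fun a x hax ↦ or_iff_not_imp_left.2 fun ha ↦ ?_
  refine hψ.eq_zero_of_forall_apply_eq_zero fun y ↦ ?_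
  have hmul : a * ψ x y = 0 := by
    rw [← smul_eq_mul, ← LinearMap.map_smul₂, hax, LinearMap.map_zero₂]
  have hx : ψ x y = 0 := (mul_eq_zero.1 hmul).resolve_left ha
  rw [← hψ.conj_apply, hx, map_zero]

lemma exists_forall_apply_eq_θ_mul (hψ : IsθModular ψ) (z : M) :
    ∃ κ : M →ₗ[O] O, ∀ x, ψ x z = θ * κ x := by
  obtain ⟨κ, hκ⟩ := exists_eq_smul_of_forall_exists (.of_ne_zero θ_ne_zero) (ψ.flip z)
    fun x ↦ hψ.θ_dvd_apply x z
  exact ⟨κ, LinearMap.congr_fun hκ⟩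

lemma exists_eq_conj_smul (hψ : IsθModular ψ) {d : O} (hd : d ≠ 0) {x : M}
    (hx : ∀ y, d * θ ∣ ψ y x) : ∃ t, x = conj d • t := by
  obtain ⟨φ, hφ⟩ := exists_eq_smul_of_forall_exists
    (.of_ne_zero (mul_ne_zero hd θ_ne_zero)) (ψ.flip x) hx
  obtain ⟨t, ht, -⟩ := hψ.existsUnique_apply_eq φ
  refine ⟨t, sub_eq_zero.1 (hψ.eq_zero_of_forall_apply_eq_zero fun y ↦ ?_)⟩
  have hy : ψ y x = d * θ * φ y := LinearMap.congr_fun hφ y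
  rw [map_sub, map_smulₛₗ, conj_conj, hy, ht, smul_eq_mul, mul_assoc, sub_self]

lemma three_mul_norm_sq_dvd_norm_apply_smul_smul (hψ : IsθModular ψ) (d : O) (x y : M) :
    3 * Algebra.norm ℤ d ^ 2 ∣ Algebra.norm ℤ (ψ (d • x) (d • y)) := by
  obtain ⟨c, hc⟩ := hψ.θ_dvd_apply x y
  refine ⟨Algebra.norm ℤ c, ?_⟩
  rw [apply_smul_smul, hc]
  simp only [map_mul, norm_conj, norm_θ]
  ring

lemma not_forall_mul_θ_dvd_apply (hψ : IsθModular ψ) {z : M} (hz : ψ z z = 6) {d : O}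
    (hd : ¬3 * Algebra.norm ℤ d ^ 2 ∣ 36) (hd0 : d ≠ 0) : ¬∀ y, d * θ ∣ ψ y z := by
  intro h
  obtain ⟨t, ht⟩ := hψ.exists_eq_conj_smul hd0 h
  have hdvd := hψ.three_mul_norm_sq_dvd_norm_apply_smul_smul (conj d) t t
  rw [← ht, hz, norm_conj] at hdvd
  have h6 : Algebra.norm ℤ (6 : O) = 36 := by simpa using norm_intCast 6
  exact hd (h6 ▸ hdvd)

/-- The ideal `θ⁻¹ψ(M, z)` contains `θ⁻¹ψ(z, z) = -2θ`, so if it were proper it would lie in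
one of the two primes `(2)` and `(θ)`, making `z` divisible by `2` or by `θ`. -/
lemma exists_apply_eq_θ (hψ : IsθModular ψ) {z : M} (hz : ψ z z = 6) : ∃ w, ψ w z = θ := by
  obtain ⟨κ, hκ⟩ := hψ.exists_forall_apply_eq_θ_mul z
  suffices hrange : LinearMap.range κ = ⊤ by
    obtain ⟨w, hw⟩ := LinearMap.range_eq_top.1 hrange 1
    exact ⟨w, by rw [hκ, hw, mul_one]⟩
  by_contra hne
  obtain ⟨m, hm, hle⟩ := Ideal.exists_le_maximal _ hne
  have hκm (y : M) : κ y ∈ m := hle ⟨y, rfl⟩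
  have hκz : κ z = -(2 * θ) := by
    refine mul_left_cancel₀ θ_ne_zero ?_
    rw [← hκ, hz]
    linear_combination 2 * θ_mul_θ
  have hmem : 2 * θ ∈ m := by simpa [hκz] using hκm z
  rcases hm.isPrime.mem_or_mem hmem with h2 | hθ
  · refine hψ.not_forall_mul_θ_dvd_apply hz (d := 2) (by norm_num [norm_two])
      (left_ne_zero_of_mul two_mul_θ_ne_zero) fun y ↦ ?_
    rw [hκ, mul_comm]
    exact mul_dvd_mul_left θ <| two_dvd_of_two_dvd_norm <|
      dvd_norm_of_mem Int.prime_two hm.ne_top (mod_cast h2) (hκm y)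
  · have h3 : ((3 : ℤ) : O) ∈ m := by
      have := m.mul_mem_left (-θ) hθ
      rwa [neg_mul, θ_mul_θ, neg_neg] at this
    refine hψ.not_forall_mul_θ_dvd_apply hz (d := θ) (by norm_num [norm_θ]) θ_ne_zero
      fun y ↦ ?_
    rw [hκ]
    exact mul_dvd_mul_left θ <| θ_dvd_of_three_dvd_norm <|
      dvd_norm_of_mem Int.prime_three hm.ne_top h3 (hκm y)

lemma exists_forall_dvd_apply_sub_smul (hψ : IsθModular ψ) {z w : M} (hw : ψ w z = θ) {d : O}
    {x : M} (hx : ∀ y ∈ perp ψ z, d ∣ ψ y x) : ∃ c : O, ∀ y, d ∣ ψ y (x - c • z) := by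
  obtain ⟨κ, hκ⟩ := hψ.exists_forall_apply_eq_θ_mul z
  obtain ⟨e, he⟩ := hψ.θ_dvd_apply w x
  refine ⟨conj e, fun y ↦ ?_⟩
  have hwx : ψ w (x - conj e • z) = 0 := by
    rw [map_sub, map_smulₛₗ, conj_conj, smul_eq_mul, hw, he, mul_comm, sub_self]
  have hy : y - κ y • w ∈ perp ψ z := sub_smul_mem_perp hw (hκ y)
  have hyx : ψ y (x - conj e • z) = ψ (y - κ y • w) x := by
    calc ψ y (x - conj e • z) = ψ (y - κ y • w) (x - conj e • z) := by
          rw [LinearMap.map_sub₂, LinearMap.map_smul₂, hwx, smul_zero, sub_zero]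
      _ = ψ (y - κ y • w) x := by
          rw [map_sub, map_smulₛₗ, mem_perp.1 hy, smul_zero, sub_zero]
  rw [hyx]
  exact hx _ hy

lemma exists_eq_smul_of_forall_perp (hψ : IsθModular ψ) {z w : M} (hw : ψ w z = θ) {x : M}
    (hx : ∀ y ∈ perp ψ z, ψ y x = 0) : ∃ c : O, x = c • z := by
  obtain ⟨c, hc⟩ := hψ.exists_forall_dvd_apply_sub_smul hw fun y hy ↦ zero_dvd_iff.2 (hx y hy)
  exact ⟨c, sub_eq_zero.1 (hψ.eq_zero_of_forall_apply_eq_zero fun y ↦ zero_dvd_iff.1 (hc y))⟩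

lemma dvd_of_smul_eq_smul (hψ : IsθModular ψ) {z w : M} (hw : ψ w z = θ) {a d : O} {t : M}
    (h : a • z = d • t) : d ∣ a := by
  obtain ⟨c, hc⟩ := hψ.θ_dvd_apply t w
  refine ⟨-c, mul_left_cancel₀ θ_ne_zero ?_⟩
  have hzw : ψ z w = -θ := by rw [← hψ.conj_apply, hw, conj_θ]
  have hpair := congrArg (fun x ↦ ψ x w) h
  simp only [LinearMap.map_smul₂, smul_eq_mul, hzw, hc] at hpair
  linear_combination -hpair

lemma six_dvd_apply_of_mem_perp (hψ : IsθModular ψ) {y z w : M} (hy : y ∈ perp ψ z) :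
    6 ∣ ψ y ((2 * θ) • w + z) := by
  obtain ⟨c, hc⟩ := hψ.θ_dvd_apply y w
  refine ⟨c, ?_⟩
  rw [map_add, map_smulₛₗ, mem_perp.1 hy, conj_two_mul_θ, hc, smul_eq_mul]
  linear_combination -2 * c * θ_mul_θ

lemma exists_eq_smul_add_smul_of_forall_six_dvd (hψ : IsθModular ψ) {z w : M} (hw : ψ w z = θ)
    (u x : perp ψ z) (hu : (u : M) = (2 * θ) • w + z) (hx : ∀ y : perp ψ z, 6 ∣ ψ y x) :
    ∃ (a : O) (v : perp ψ z), x = a • u + (2 * θ) • v := by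
  obtain ⟨a, ha⟩ := hψ.exists_forall_dvd_apply_sub_smul hw fun y hy ↦ six_eq ▸ hx ⟨y, hy⟩
  obtain ⟨t, ht⟩ := hψ.exists_eq_conj_smul (neg_ne_zero.2 two_mul_θ_ne_zero) ha
  rw [map_neg, conj_two_mul_θ, neg_neg] at ht
  have hxu : (2 * θ) • (t - a • w) = (x - a • u : M) := by
    rw [hu]
    linear_combination (norm := module) -ht
  have hmem : t - a • w ∈ perp ψ z := by
    have h : (2 * θ) * ψ (t - a • w) z = 0 := by
      rw [← smul_eq_mul, ← LinearMap.map_smul₂, hxu]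
      exact (x - a • u).2
    exact (mul_eq_zero.1 h).resolve_left two_mul_θ_ne_zero
  refine ⟨a, ⟨t - a • w, hmem⟩, Subtype.ext ?_⟩
  push_cast
  rw [hxu, add_sub_cancel]

lemma exists_map_eq_smul_add_smul (hψ : IsθModular ψ) {z w : M} (hw : ψ w z = θ)
    (u : perp ψ z) (hu : (u : M) = (2 * θ) • w + z) (h : perp ψ z ≃ₗ[O] perp ψ z)
    (hh : ∀ x y : perp ψ z, ψ (h x) (h y) = ψ x y) :
    ∃ (a : O) (v : perp ψ z), h u = a • u + (2 * θ) • v := by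
  refine hψ.exists_eq_smul_add_smul_of_forall_six_dvd hw u (h u) hu fun y ↦ ?_
  rw [← h.apply_symm_apply y, hh, hu]
  exact hψ.six_dvd_apply_of_mem_perp (h.symm y).2

lemma exists_map_eq_unit_smul_add_smul (hψ : IsθModular ψ) {z w : M} (hw : ψ w z = θ)
    (u : perp ψ z) (hu : (u : M) = (2 * θ) • w + z) (h : perp ψ z ≃ₗ[O] perp ψ z)
    (hh : ∀ x y : perp ψ z, ψ (h x) (h y) = ψ x y) :
    ∃ (ε : O) (v : perp ψ z), ε * conj ε = 1 ∧ h u = ε • u + (2 * θ) • v := by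
  have hh_symm (x y : perp ψ z) : ψ (h.symm x) (h.symm y) = ψ x y := by
    rw [← hh, h.apply_symm_apply, h.apply_symm_apply]
  obtain ⟨a, v, hv⟩ := hψ.exists_map_eq_smul_add_smul hw u hu h hh
  obtain ⟨a', v', hv'⟩ := hψ.exists_map_eq_smul_add_smul hw u hu h.symm hh_symm
  have hround : u = a' • (a • u + (2 * θ) • v) + (2 * θ) • h v' := by
    rw [← hv, ← map_smul, ← map_smul, ← map_add, ← hv', h.apply_symm_apply]
  have hz : (1 - a' * a) • z =
      (2 * θ) • (a' • (v : M) + (h v' : M) - (1 - a' * a) • w) := by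
    have h := congrArg (Subtype.val) hround
    push_cast [hu] at h
    linear_combination (norm := module) h
  obtain ⟨e, he⟩ := hψ.dvd_of_smul_eq_smul hw hz
  have hcop : IsCoprime a (2 * θ) := ⟨a', e, by linear_combination -he⟩
  obtain ⟨ε, d, hε, rfl⟩ := exists_norm_eq_one_of_isCoprime_two_mul_θ hcop
  refine ⟨ε, d • u + v, mul_conj_eq_one_iff.2 hε, ?_⟩
  rw [hv]
  module

lemma apply_sub_smul_sub_smul (hψ : IsθModular ψ) {z x y : M} (hx : x ∈ perp ψ z)
    (hy : y ∈ perp ψ z) (a c : O) :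
    ψ (x - a • z) (y - c • z) = ψ x y + a * conj c * ψ z z := by
  have hzy : ψ z y = 0 := by rw [← hψ.conj_apply, mem_perp.1 hy, map_zero]
  rw [LinearMap.map_sub₂, map_sub, map_sub, apply_smul_smul, LinearMap.map_smul₂, hzy,
    (ψ x).map_smulₛₗ, mem_perp.1 hx, smul_zero, smul_zero]
  ring

end IsθModular

/-- Orthogonal projection onto `z^⊥` multiplied by `2θ`, for a `6`-vector `z`. If
`ψ(x, z) = θκ(x)`, the projection is `x - (ψ(x, z)/6)z = x + (κ(x)/2θ)z`. -/
def scaledProj {z : M} (hz : ψ z z = 6) {κ : M →ₗ[O] O} (hκ : ∀ x, ψ x z = θ * κ x) :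
    M →ₗ[O] perp ψ z :=
  LinearMap.codRestrict _ ((2 * θ) • LinearMap.id + κ.smulRight z)
    fun x ↦ smul_add_smul_mem_perp hz (hκ x)

lemma coe_scaledProj {z : M} (hz : ψ z z = 6) {κ : M →ₗ[O] O} (hκ : ∀ x, ψ x z = θ * κ x)
    (x : M) : (scaledProj hz hκ x : M) = (2 * θ) • x + κ x • z :=
  rfl

lemma scaledProj_eq_add {z w : M} (hz : ψ z z = 6) {κ : M →ₗ[O] O}
    (hκ : ∀ x, ψ x z = θ * κ x) (hw : ψ w z = θ) (x : M) :
    scaledProj hz hκ x =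
      (2 * θ) • ⟨x - κ x • w, sub_smul_mem_perp hw (hκ x)⟩ + κ x • scaledProj hz hκ w := by
  have hκw : κ w = 1 := mul_left_cancel₀ θ_ne_zero (by rw [← hκ, hw, mul_one])
  refine Subtype.ext ?_
  push_cast [coe_scaledProj, hκw]
  module

namespace IsθModular

lemma exists_map_scaledProj_sub_smul_eq (hψ : IsθModular ψ) {z : M} (hz : ψ z z = 6)
    {κ : M →ₗ[O] O} (hκ : ∀ x, ψ x z = θ * κ x) (h : perp ψ z ≃ₗ[O] perp ψ z)
    (hh : ∀ x y : perp ψ z, ψ (h x) (h y) = ψ x y) :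
    ∃ ε, ε * conj ε = 1 ∧
      ∀ x, ∃ y, (h (scaledProj hz hκ x) : M) - κ x • ε • z = (2 * θ) • y := by
  obtain ⟨w, hw⟩ := hψ.exists_apply_eq_θ hz
  have hκw : κ w = 1 := mul_left_cancel₀ θ_ne_zero (by rw [← hκ, hw, mul_one])
  have hu : (scaledProj hz hκ w : M) = (2 * θ) • w + z := by
    rw [coe_scaledProj, hκw, one_smul]
  obtain ⟨ε, v, hε, hv⟩ := hψ.exists_map_eq_unit_smul_add_smul hw (scaledProj hz hκ w) hu h hh
  refine ⟨ε, hε, fun x ↦ ?_⟩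
  let x' : perp ψ z := ⟨x - κ x • w, sub_smul_mem_perp hw (hκ x)⟩
  refine ⟨h x' + κ x • (ε • w + v), ?_⟩
  rw [scaledProj_eq_add hz hκ hw, map_add, map_smul, map_smul, hv]
  push_cast [hu]
  module

lemma apply_sub_smul_eq_apply_smul_smul (hψ : IsθModular ψ) {z : M} (hz : ψ z z = 6)
    {κ : M →ₗ[O] O} (hκ : ∀ x, ψ x z = θ * κ x) {h : perp ψ z → perp ψ z}
    (hh : ∀ x y : perp ψ z, ψ (h x) (h y) = ψ x y) {ε : O} (hε : ε * conj ε = 1) (x y : M) :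
    ψ ((h (scaledProj hz hκ x) : M) - κ x • ε • z) (h (scaledProj hz hκ y) - κ y • ε • z) =
      ψ ((2 * θ) • x) ((2 * θ) • y) := by
  have hdecomp (x : M) : (2 * θ) • x = (scaledProj hz hκ x : M) - κ x • z := by
    rw [coe_scaledProj, add_sub_cancel_right]
  rw [hdecomp x, hdecomp y, smul_smul, smul_smul,
    hψ.apply_sub_smul_sub_smul (h _).2 (h _).2,
    hψ.apply_sub_smul_sub_smul (scaledProj hz hκ x).2 (scaledProj hz hκ y).2, hh, map_mul]
  linear_combination κ x * conj (κ y) * ψ z z * hε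

/-- The isometry `h ⊥ ε` is defined on `2θM`, since `2θx = (2θx + κ(x)z) - κ(x)z` is an orthogonal
decomposition when `ψ(x, z) = θκ(x)`; the choice of `ε` makes its values divisible by `2θ`. -/
lemma exists_isometry_extending (hψ : IsθModular ψ) {z : M} (hz : ψ z z = 6)
    (h : perp ψ z ≃ₗ[O] perp ψ z) (hh : ∀ x y : perp ψ z, ψ (h x) (h y) = ψ x y) :
    ∃ f : M →ₗ[O] M, (∀ x y, ψ (f x) (f y) = ψ x y) ∧ ∀ x : perp ψ z, f x = h x := by
  have := hψ.isTorsionFree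
  obtain ⟨κ, hκ⟩ := hψ.exists_forall_apply_eq_θ_mul z
  obtain ⟨ε, hε, hdvd⟩ := hψ.exists_map_scaledProj_sub_smul_eq hz hκ h hh
  let F : M →ₗ[O] M :=
    (perp ψ z).subtype ∘ₗ h.toLinearMap ∘ₗ scaledProj hz hκ - κ.smulRight (ε • z)
  obtain ⟨f, hf⟩ := exists_eq_smul_of_forall_exists (.of_ne_zero two_mul_θ_ne_zero) F hdvd
  have hf_apply (x : M) : (2 * θ) • f x = (h (scaledProj hz hκ x) : M) - κ x • ε • z :=
    (LinearMap.congr_fun hf x).symm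
  refine ⟨f, fun x y ↦ ?_, fun x ↦ ?_⟩
  · have hscaled := hψ.apply_sub_smul_eq_apply_smul_smul hz hκ hh hε x y
    rw [← hf_apply, ← hf_apply, apply_smul_smul, apply_smul_smul, conj_two_mul_θ] at hscaled
    exact mul_left_cancel₀
      (mul_ne_zero two_mul_θ_ne_zero (neg_ne_zero.2 two_mul_θ_ne_zero)) hscaled
  · have hκx : κ x = 0 := by
      have h0 : θ * κ x = 0 := by rw [← hκ, mem_perp.1 x.2]
      exact (mul_eq_zero.1 h0).resolve_left θ_ne_zero
    have hproj : scaledProj hz hκ x = (2 * θ) • x := Subtype.ext <| by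
      rw [coe_scaledProj, hκx, zero_smul, add_zero, Submodule.coe_smul]
    refine smul_right_injective M two_mul_θ_ne_zero ?_
    simp only [hf_apply, hproj, hκx, map_smul, zero_smul, sub_zero, Submodule.coe_smul]

lemma isometry_eq_id (hψ : IsθModular ψ) {z : M} (hz : ψ z z = 6) (f : M →ₗ[O] M)
    (hf : ∀ x y, ψ (f x) (f y) = ψ x y) (hfix : ∀ x ∈ perp ψ z, f x = x) : f = LinearMap.id := by
  have := hψ.isTorsionFree
  obtain ⟨w, hw⟩ := hψ.exists_apply_eq_θ hz
  obtain ⟨κ, hκ⟩ := hψ.exists_forall_apply_eq_θ_mul z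
  obtain ⟨a, ha⟩ : ∃ a : O, f z = a • z := by
    refine hψ.exists_eq_smul_of_forall_perp hw fun y hy ↦ ?_
    rw [← hfix y hy, hf]
    exact hy
  have hnorm : Algebra.norm ℤ a = 1 := by
    have h6 : (6 : O) ≠ 0 := by
      rw [six_eq]
      exact mul_ne_zero (neg_ne_zero.2 two_mul_θ_ne_zero) θ_ne_zero
    refine mul_conj_eq_one_iff.1 (mul_right_cancel₀ h6 ?_)
    rw [one_mul, ← hz, ← apply_smul_smul, ← ha, hf]
  have hu : f ((2 * θ) • w + (1 : O) • z) = (2 * θ) • w + (1 : O) • z :=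
    hfix _ (smul_add_smul_mem_perp hz (by rw [hw, mul_one]))
  rw [map_add, map_smul, map_smul, ha] at hu
  have hsub : (a - 1) • z = (2 * θ) • (w - f w) := by
    linear_combination (norm := module) hu
  obtain rfl := eq_one_of_norm_eq_one_of_two_mul_θ_dvd hnorm (hψ.dvd_of_smul_eq_smul hw hsub)
  have hfw : f w = w := by
    rw [sub_self, zero_smul, eq_comm, smul_eq_zero] at hsub
    exact (sub_eq_zero.1 (hsub.resolve_left two_mul_θ_ne_zero)).symm
  ext x
  have hx := hfix _ (sub_smul_mem_perp hw (hκ x))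
  rwa [map_sub, map_smul, hfw, sub_left_inj] at hx

end IsθModular

theorem statement9_general (hψ : IsθModular ψ) {z : M} (hz : ψ z z = 6)
    (h : perp ψ z ≃ₗ[O] perp ψ z) (hh : ∀ x y : perp ψ z, ψ (h x) (h y) = ψ x y) :
    ∃! g : M ≃ₗ[O] M, (∀ x y, ψ (g x) (g y) = ψ x y) ∧ ∀ x : perp ψ z, g x = h x := by
  have hh_symm (x y : perp ψ z) : ψ (h.symm x) (h.symm y) = ψ x y := by
    rw [← hh, h.apply_symm_apply, h.apply_symm_apply]
  obtain ⟨f, hf, hfh⟩ := hψ.exists_isometry_extending hz h hh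
  obtain ⟨f', hf', hfh'⟩ := hψ.exists_isometry_extending hz h.symm hh_symm
  have left_inverse (k : M →ₗ[O] M) (hk : ∀ x y, ψ (k x) (k y) = ψ x y)
      (hkh : ∀ x : perp ψ z, k x = h x) : f' ∘ₗ k = LinearMap.id :=
    hψ.isometry_eq_id hz _ (fun x y ↦ by simp only [LinearMap.comp_apply, hf', hk])
      fun x hx ↦ by
        rw [LinearMap.comp_apply, hkh ⟨x, hx⟩, hfh', h.symm_apply_apply]
  have right_inverse : f ∘ₗ f' = LinearMap.id :=
    hψ.isometry_eq_id hz _ (fun x y ↦ by simp only [LinearMap.comp_apply, hf, hf'])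
      fun x hx ↦ by
        rw [LinearMap.comp_apply, hfh' ⟨x, hx⟩, hfh, h.apply_symm_apply]
  refine ⟨.ofLinearMap f f' right_inverse (left_inverse f hf hfh), ⟨hf, hfh⟩, ?_⟩
  rintro g ⟨hg, hgh⟩
  ext x
  calc g x = f (f' (g x)) := (LinearMap.congr_fun right_inverse (g x)).symm
    _ = f x := congrArg f (LinearMap.congr_fun (left_inverse g hg hgh) x)

end Modular

/-! ### The lattice `Λ` is `θ`-modular -/

section Gram

open O Matrix

lemma isθModular_of_gram_eq_θ_mul {ι : Type*} [Fintype ι] [DecidableEq ι]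
    {ψ : (ι → O) →ₗ[O] (ι → O) →ₛₗ[conj] O}
    {G : Matrix ι ι O} (hψ : ∀ x y, ψ x y = θ * (x ⬝ᵥ G *ᵥ (conj ∘ y))) (hG : IsUnit G)
    (hskew : (G.map conj)ᵀ = -G) : IsθModular ψ where
  conj_apply x y := by
    have hconj_vec (x : ι → O) : conj ∘ conj ∘ x = x := funext fun i ↦ conj_conj (x i)
    have hconj_mulVec : conj ∘ (G *ᵥ (conj ∘ y)) = G.map conj *ᵥ y := funext fun i ↦ by
      rw [Function.comp_apply, RingHom.map_mulVec, hconj_vec]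
    rw [hψ, hψ, map_mul, conj_θ, RingHom.map_dotProduct, hconj_mulVec, dotProduct_mulVec,
      ← mulVec_transpose, hskew, neg_mulVec, neg_dotProduct, dotProduct_comm, neg_mul_neg]
  θ_dvd_apply x y := hψ x y ▸ dvd_mul_right θ _
  existsUnique_apply_eq φ := by
    have hconj : Function.Bijective fun t : ι → O ↦ conj ∘ t :=
      Function.Involutive.bijective fun t ↦ funext fun i ↦ conj_conj (t i)
    have hbij : Function.Bijective fun t : ι → O ↦ G *ᵥ (conj ∘ t) :=
      Function.Bijective.comp
        ⟨mulVec_injective_of_isUnit hG, mulVec_surjective_iff_isUnit.2 hG⟩ hconj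
    have hiff (t : ι → O) :
        (∀ x, ψ x t = θ * φ x) ↔ G *ᵥ (conj ∘ t) = fun i ↦ φ (Pi.single i 1) := by
      refine ⟨fun h ↦ funext fun i ↦ ?_, fun h x ↦ ?_⟩
      · have hi := h (Pi.single i 1)
        rw [hψ, single_one_dotProduct] at hi
        exact mul_left_cancel₀ θ_ne_zero hi
      · refine LinearMap.congr_fun (f := ψ.flip t) (g := θ • φ)
          ((Pi.basisFun O ι).ext fun i ↦ ?_) x
        rw [Pi.basisFun_apply, LinearMap.flip_apply, hψ, single_one_dotProduct, h,
          LinearMap.smul_apply, smul_eq_mul]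
    simpa only [hiff] using hbij.existsUnique _

/-- The Gram matrix of `Λ⁴` divided by `θ`; the diagonal entries are `3/θ = -θ`. -/
def gramΛ4Divθ : Matrix (Fin 4) (Fin 4) O :=
  !![-θ, 1, 0, 0; -1, -θ, 1, 0; 0, -1, -θ, 1; 0, 0, -1, -θ]

/-- The Gram matrix of `H_𝒪` divided by `θ`. -/
def gramHDivθ : Matrix (Fin 2) (Fin 2) O :=
  !![0, 1; -1, 0]

/-- The Gram matrix of `Λ = Λ′ ⊥ Λ″ ⊥ H_𝒪` divided by `θ`. -/
def gram10Divθ : Matrix (Fin 10) (Fin 10) O :=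
  reindex finSumFinEquiv finSumFinEquiv
    (fromBlocks
      (reindex finSumFinEquiv finSumFinEquiv (fromBlocks gramΛ4Divθ 0 0 gramΛ4Divθ)) 0
      0 gramHDivθ)

lemma det_gramΛ4Divθ : gramΛ4Divθ.det = 1 := by
  have hdet : gramΛ4Divθ.det = θ ^ 4 + 3 * θ ^ 2 + 1 := by
    simp [gramΛ4Divθ, det_succ_row_zero, Fin.sum_univ_succ, Fin.succAbove]
    ring
  rw [hdet]
  linear_combination θ ^ 2 * θ_mul_θ

lemma isUnit_gram10Divθ : IsUnit gram10Divθ := by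
  rw [isUnit_iff_isUnit_det, gram10Divθ, det_reindex_self, det_fromBlocks_zero₂₁,
    det_reindex_self, det_fromBlocks_zero₂₁, det_gramΛ4Divθ, gramHDivθ, det_fin_two_of]
  simp

lemma gram10_eq_θ_mul (i j : Fin 10) : gram10 i j = θ * gram10Divθ i j := by
  have hθ : (3 : O) = -(θ * θ) := by rw [θ_mul_θ, neg_neg]
  fin_cases i <;> fin_cases j <;>
    simp [gram10, gram10Divθ, gramΛ4Divθ, gramHDivθ, conj_θ, finSumFinEquiv, Fin.addCases, hθ]

lemma transpose_map_conj_gram10Divθ : (gram10Divθ.map conj)ᵀ = -gram10Divθ := by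
  have hΛ4 : (gramΛ4Divθ.map conj)ᵀ = -gramΛ4Divθ := by
    ext i j
    fin_cases i <;> fin_cases j <;> simp [gramΛ4Divθ, conj_θ]
  have hH : (gramHDivθ.map conj)ᵀ = -gramHDivθ := by
    ext i j
    fin_cases i <;> fin_cases j <;> simp [gramHDivθ]
  simp only [gram10Divθ, reindex_apply, ← submatrix_map, fromBlocks_map, transpose_submatrix,
    fromBlocks_transpose, hΛ4, hH, Matrix.map_zero _ (map_zero conj), transpose_zero]
  have submatrix_neg_apply {m n : Type} (A : Matrix m m O) (e : n → m) :
      (-A).submatrix e e = -A.submatrix e e := rfl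
  simp only [← submatrix_neg_apply, fromBlocks_neg, neg_zero]

lemma psi10_eq_θ_mul (x y : Fin 10 → O) :
    psi10 x y = θ * (x ⬝ᵥ gram10Divθ *ᵥ (conj ∘ y)) := by
  simp only [psi10, gram10_eq_θ_mul, dotProduct, mulVec, Finset.mul_sum, Function.comp_apply]
  exact Finset.sum_congr rfl fun i _ ↦ Finset.sum_congr rfl fun j _ ↦ by ring

/-- `psi10` as a bundled sesquilinear form. -/
def psi10Form : (Fin 10 → O) →ₗ[O] (Fin 10 → O) →ₛₗ[conj] O :=
  LinearMap.mk₂'ₛₗ (RingHom.id O) conj psi10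
    (fun x x' y ↦ (psiLin y).map_add x x')
    (fun a x y ↦ (psiLin y).map_smul a x)
    (fun x y y' ↦ by
      simp only [psi10, Pi.add_apply, map_add, mul_add, add_mul, Finset.sum_add_distrib])
    (fun a x y ↦ by
      simp only [psi10, Pi.smul_apply, smul_eq_mul, map_mul, Finset.mul_sum, mul_assoc,
        mul_left_comm (conj a)])

lemma isθModular_psi10Form : IsθModular psi10Form :=
  isθModular_of_gram_eq_θ_mul psi10_eq_θ_mul isUnit_gram10Divθ transpose_map_conj_gram10Divθ

end Gram

/-- Let `z_o` be a 6-vector of `Λ` and `Λ_o` its orthogonal complement.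
Every ψ-unitary 𝒪-module automorphism `h` of `Λ_o` extends *uniquely* to a ψ-unitary
automorphism of `Λ`; i.e. the restriction homomorphism from the stabilizer
`{g ∈ U(Λ) : g(Λ_o) = Λ_o}` to `U(Λ_o)` is a group isomorphism. -/
theorem statement9 (zo : Fin 10 → O) (hzo : psi10 zo zo = 6)
    (h : ↥(Λo zo) ≃ₗ[O] ↥(Λo zo))
    (hh : ∀ u v : ↥(Λo zo),
      psi10 (h u : Fin 10 → O) (h v : Fin 10 → O) = psi10 (u : Fin 10 → O) (v : Fin 10 → O)) :
    ∃! g : (Fin 10 → O) ≃ₗ[O] (Fin 10 → O),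
      IsUnitary10 g ∧ ∀ u : ↥(Λo zo), g (u : Fin 10 → O) = (h u : Fin 10 → O) :=
  statement9_general isθModular_psi10Form hzo h hh

end
end

section
/- Let z_o be a 6-vector of the rank-10 𝒪-lattice Λ = Λ′ ⊥ Λ″ ⊥ H_𝒪 and Λ_o := {x ∈ Λ : ψ(x, z_o) = 0}. Call a 3-vector r ∈ Λ admissible if the 𝒪-submodule M_r := 𝒪z_o + 𝒪r is positive definite and primitive in Λ (i.e. M_r = (ℚ(ω)·M_r) ∩ Λ), and define its d-invariant d(r) as the determinant of the Gram matrix of ψ on an 𝒪-basis of M_r. Then d(r) ∈ {6, 9, 15, 18} for every admissible 3-vector r, and for any two admissible 3-vectors r, r' with d(r) = d(r') there exists g ∈ U(Λ) with g(Λ_o) = Λ_o and g(r) = r'. -/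
open Polynomial

noncomputable section

/-- A submodule is positive definite (for `psi10`): `ψ(x,x)` is a positive integer for
every nonzero `x` in it. -/
def PosDefOn (M : Submodule O (Fin 10 → O)) : Prop :=
  ∀ x ∈ M, x ≠ 0 → ∃ n : ℕ, 0 < n ∧ psi10 x x = (n : O)

/-- A submodule `M` is primitive (saturated) in `Λ`: `M = (ℚ(ω)·M) ∩ Λ`, i.e.
`a • x ∈ M` with `a ≠ 0` implies `x ∈ M`. -/
def IsPrimitiveSubmodule (M : Submodule O (Fin 10 → O)) : Prop :=
  ∀ (a : O) (x : Fin 10 → O), a ≠ 0 → a • x ∈ M → x ∈ M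

/-- `M_r := 𝒪z_o + 𝒪r`. -/
def Mr (zo x : Fin 10 → O) : Submodule O (Fin 10 → O) := Submodule.span O {zo, x}

/-- A 3-vector `r` is admissible (relative to `z_o`): `M_r = 𝒪z_o + 𝒪r` is positive
definite and primitive in `Λ`. -/
def Admissible (zo x : Fin 10 → O) : Prop :=
  psi10 x x = 3 ∧ PosDefOn (Mr zo x) ∧ IsPrimitiveSubmodule (Mr zo x)

/-- `M` has `d`-invariant `d`: the determinant of the Gram matrix of `ψ` on an 𝒪-basis
`(e₁,e₂)` of `M` equals `d` (this is independent of the basis, as the units of `𝒪` have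
norm one). -/
def HasDet (M : Submodule O (Fin 10 → O)) (d : O) : Prop :=
  ∃ e₁ e₂ : Fin 10 → O, e₁ ∈ M ∧ e₂ ∈ M ∧ Submodule.span O {e₁, e₂} = M ∧
    LinearIndependent O ![e₁, e₂] ∧
    psi10 e₁ e₁ * psi10 e₂ e₂ - psi10 e₁ e₂ * psi10 e₂ e₁ = d

/-!
Divide the form by `θ`: the resulting skew-Hermitian form is unimodular, and the `ℤ`-lattice
underlying `Λ⁴` is `E₈`. Conway-style descent moves every null vector of `Λ` into the standard null
line of `H_𝒪`: given a null vector `(x, p, q)` with `x ∈ Λ′ ⊥ Λ″`, translate so that `x / q` is as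
close to the lattice as the covering radius of `E₈` allows, and exchange `p` and `q`. The norm of
`q` drops except at a deep hole, where one more translation by a root makes it drop.

For an admissible `r` put `a = ψ(z_o, r) / θ`. The Gram determinant is `18 - 3 |a|²`, and positivity
forces `|a|² < 6`, so `|a|² ∈ {0, 1, 3, 4}`. There is a pair with the same Gram matrix orthogonal to
a null vector, hence by Witt's theorem `z_o` and `r` are themselves orthogonal to some null vector,
which can be moved to the standard one. Primitivity of `𝒪z_o + 𝒪r` then allows to bring the pair
to a normal form determined by `a`. As the norm of `a` determines `a` up to a unit, pairs with
the same determinant differ by an isometry that preserves the line of `z_o`.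
-/

namespace EisensteinLattice

/-! ### The Eisenstein ring -/

/-- The identification of `𝒪` with pairs of integers, `m + n ω ↔ (m, n)`. -/
def equivQuadratic : O ≃ₐ[ℤ] QuadraticAlgebra ℤ (-1) 1 :=
  AlgEquiv.ofAlgHom
    (AdjoinRoot.liftAlgHom _ (Algebra.ofId ℤ _) ⟨0, 1⟩ (by
      simp only [eval₂_add, eval₂_sub, eval₂_pow, eval₂_X, eval₂_one]
      ext <;> simp [pow_two, QuadraticAlgebra.re_one, QuadraticAlgebra.im_one]))
    (QuadraticAlgebra.lift ⟨ω, by simp only [neg_smul, one_smul]; linear_combination ω_sq⟩)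
    (by ext <;> simp [QuadraticAlgebra.lift, ω])
    (by ext; simp [QuadraticAlgebra.lift, ω])

/-- The coordinate `m` of `m + n ω`; this is not the real part of a complex number. -/
def re (a : O) : ℤ := (equivQuadratic a).re

/-- The coordinate `n` of `m + n ω`; this is not the imaginary part of a complex number. -/
def im (a : O) : ℤ := (equivQuadratic a).im

lemma ext_re_im {a b : O} (hre : re a = re b) (him : im a = im b) : a = b :=
  equivQuadratic.injective (QuadraticAlgebra.ext hre him)

lemma equivQuadratic_ω : equivQuadratic ω = ⟨0, 1⟩ := by simp [equivQuadratic, ω]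

lemma ω_mul_ω : ω * ω = ω - 1 := by linear_combination ω_sq

@[simp] lemma conj_ω : conj ω = 1 - ω := by simp [conj, ω]

lemma θ_eq : θ = 2 * ω - 1 := by rw [θ, conj_ω]; ring

@[simp] lemma re_zero : re 0 = 0 := by simp [re]
@[simp] lemma im_zero : im 0 = 0 := by simp [im]
@[simp] lemma re_one : re 1 = 1 := by simp [re, QuadraticAlgebra.re_one]
@[simp] lemma im_one : im 1 = 0 := by simp [im, QuadraticAlgebra.im_one]
@[simp] lemma re_ω : re ω = 0 := by simp [re, equivQuadratic_ω]
@[simp] lemma im_ω : im ω = 1 := by simp [im, equivQuadratic_ω]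
@[simp] lemma re_add (a b : O) : re (a + b) = re a + re b := by simp [re]
@[simp] lemma im_add (a b : O) : im (a + b) = im a + im b := by simp [im]
@[simp] lemma re_sub (a b : O) : re (a - b) = re a - re b := by simp [re]
@[simp] lemma im_sub (a b : O) : im (a - b) = im a - im b := by simp [im]
@[simp] lemma re_neg (a : O) : re (-a) = -re a := by simp [re]
@[simp] lemma im_neg (a : O) : im (-a) = -im a := by simp [im]
@[simp] lemma re_mul (a b : O) : re (a * b) = re a * re b - im a * im b := by
  simp [re, im]; ring
@[simp] lemma im_mul (a b : O) : im (a * b) = re a * im b + im a * re b + im a * im b := by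
  simp [re, im]
@[simp] lemma re_intCast (n : ℤ) : re (n : O) = n := by simp [re]
@[simp] lemma im_intCast (n : ℤ) : im (n : O) = 0 := by simp [im]
@[simp] lemma re_natCast (n : ℕ) : re (n : O) = n := by simp [re]
@[simp] lemma im_natCast (n : ℕ) : im (n : O) = 0 := by simp [im]
@[simp] lemma re_ofNat (n : ℕ) [n.AtLeastTwo] : re (ofNat(n) : O) = ofNat(n) := re_natCast n
@[simp] lemma im_ofNat (n : ℕ) [n.AtLeastTwo] : im (ofNat(n) : O) = 0 := im_natCast n
@[simp] lemma re_θ : re θ = -1 := by simp [θ_eq]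
@[simp] lemma im_θ : im θ = 2 := by simp [θ_eq]

lemma eq_re_add_im (a : O) : a = re a + im a * ω := ext_re_im (by simp) (by simp)

lemma conj_eq (a : O) : conj a = re a + im a * (1 - ω) := by
  conv_lhs => rw [eq_re_add_im a]
  simp

@[simp] lemma re_conj (a : O) : re (conj a) = re a + im a := by simp [conj_eq a]
@[simp] lemma im_conj (a : O) : im (conj a) = -im a := by simp [conj_eq a]
@[simp] lemma conj_conj (a : O) : conj (conj a) = a := ext_re_im (by simp) (by simp)
@[simp] lemma conj_θ : conj θ = -θ := ext_re_im (by simp) (by simp)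
@[simp] lemma conj_intCast (n : ℤ) : conj (n : O) = n := map_intCast conj n
lemma θ_mul_θ : θ * θ = -3 := ext_re_im (by simp) (by simp)

/-- The norm `a ↦ a * conj a` of `𝒪`, as an integer. -/
def norm : O →* ℤ := QuadraticAlgebra.norm.comp (equivQuadratic : O →* QuadraticAlgebra ℤ (-1) 1)

lemma norm_eq (a : O) : norm a = re a ^ 2 + re a * im a + im a ^ 2 := by
  simp [norm, QuadraticAlgebra.norm_def, re, im]; ring

lemma intCast_norm (a : O) : (norm a : O) = a * conj a :=
  ext_re_im (by simp only [norm_eq, re_intCast, re_mul, re_conj, im_conj]; ring)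
    (by simp only [im_intCast, im_mul, im_conj, mul_neg, re_conj]; ring)

@[simp] lemma norm_zero : norm 0 = 0 := by simp [norm_eq]
@[simp] lemma norm_conj (a : O) : norm (conj a) = norm a := by
  simp only [norm_eq, re_conj, im_conj]; ring
@[simp] lemma norm_neg (a : O) : norm (-a) = norm a := by simp [norm_eq]
@[simp] lemma norm_intCast (n : ℤ) : norm (n : O) = n ^ 2 := by simp [norm_eq]
@[simp] lemma norm_ofNat (n : ℕ) [n.AtLeastTwo] : norm (ofNat(n) : O) = ofNat(n) ^ 2 :=
  norm_intCast n
@[simp] lemma norm_ω : norm ω = 1 := by simp [norm_eq]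
@[simp] lemma norm_θ : norm θ = 3 := by simp [norm_eq]

lemma norm_nonneg (a : O) : 0 ≤ norm a := by
  rw [norm_eq]; nlinarith [sq_nonneg (re a + im a), sq_nonneg (re a), sq_nonneg (im a)]

@[simp] lemma norm_eq_zero {a : O} : norm a = 0 ↔ a = 0 := by
  refine ⟨fun h => ?_, fun h => by simp [h]⟩
  rw [norm_eq] at h
  refine ext_re_im ?_ ?_ <;>
    nlinarith [sq_nonneg (re a + im a), sq_nonneg (re a), sq_nonneg (im a), re_zero, im_zero]

lemma norm_pos {a : O} (ha : a ≠ 0) : 0 < norm a :=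
  (norm_nonneg a).lt_of_ne' (norm_eq_zero.not.2 ha)

lemma mul_conj_of_norm_eq_one {u : O} (hu : norm u = 1) : u * conj u = 1 := by
  simp [← intCast_norm, hu]

instance : Nontrivial O := ⟨⟨0, 1, fun h => by simpa using congrArg re h⟩⟩

instance : NoZeroDivisors O :=
  ⟨fun h => by simpa using congrArg norm h⟩

instance : IsDomain O := NoZeroDivisors.to_isDomain O

lemma intCast_injective : Function.Injective (Int.cast : ℤ → O) :=
  fun m n h => by simpa using congrArg re h

lemma θ_ne_zero : θ ≠ 0 := fun h => by simpa [h] using norm_θ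

/-- Reduction modulo `θ`. -/
def modTheta : O →+* ZMod 3 :=
  AdjoinRoot.lift (algebraMap ℤ (ZMod 3)) (-1) (by
    simp only [eval₂_add, eval₂_sub, eval₂_pow, eval₂_X, eval₂_one]
    decide)

@[simp] lemma modTheta_ω : modTheta ω = -1 := by simp [modTheta, ω]

lemma modTheta_eq (a : O) : modTheta a = (re a - im a : ℤ) := by
  conv_lhs => rw [eq_re_add_im a]
  simp [sub_eq_add_neg]

lemma modTheta_eq_zero_iff {a : O} : modTheta a = 0 ↔ θ ∣ a := by
  refine ⟨fun h => ?_, ?_⟩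
  · rw [modTheta_eq, ZMod.intCast_zmod_eq_zero_iff_dvd] at h
    obtain ⟨k, hk⟩ := h
    push_cast at hk
    exact ⟨(re a - 2 * k : ℤ) + (k - re a : ℤ) * ω,
      ext_re_im (by simp; linarith) (by simp; linarith)⟩
  · rintro ⟨c, rfl⟩
    rw [map_mul, modTheta_eq θ, re_θ, im_θ, show ((-1 - 2 : ℤ) : ZMod 3) = 0 by decide, zero_mul]

@[simp] lemma modTheta_θ : modTheta θ = 0 := modTheta_eq_zero_iff.2 dvd_rfl

@[simp] lemma modTheta_conj (a : O) : modTheta (conj a) = modTheta a := by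
  simp only [modTheta_eq, re_conj, im_conj]
  push_cast
  linear_combination (im a : ZMod 3) * (by decide : (3 : ZMod 3) = 0)

lemma intCast_norm_zmod (a : O) : (norm a : ZMod 3) = modTheta a ^ 2 := by
  simpa [pow_two] using congrArg modTheta (intCast_norm a)

lemma norm_emod_three {a : O} (ha : modTheta a ≠ 0) : norm a % 3 = 1 := by
  have hsq : ((norm a : ℤ) : ZMod 3) = (1 : ℤ) := by
    rw [intCast_norm_zmod]
    revert ha
    generalize modTheta a = x
    revert x
    decide
  exact (ZMod.intCast_eq_intCast_iff' _ _ 3).1 hsq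

lemma two_dvd_of_even_norm {a : O} (ha : Even (norm a)) : (2 : O) ∣ a := by
  have hodd : ¬ (Odd (re a) ∨ Odd (im a)) := by
    rw [norm_eq] at ha
    simp only [← Int.not_even_iff_odd, Int.even_add, Int.even_mul, Int.even_pow] at ha ⊢
    tauto
  simp only [not_or, Int.not_odd_iff_even, even_iff_two_dvd] at hodd
  obtain ⟨⟨m, hm⟩, n, hn⟩ := hodd
  exact ⟨m + n * ω, ext_re_im (by simp [hm]) (by simp [hn])⟩

lemma norm_mem_of_le_six {a : O} (ha : norm a ≤ 6) :
    norm a = 0 ∨ norm a = 1 ∨ norm a = 3 ∨ norm a = 4 := by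
  have hnonneg := norm_nonneg a
  by_cases hmod : modTheta a = 0
  · obtain ⟨c, rfl⟩ := modTheta_eq_zero_iff.1 hmod
    rw [map_mul, norm_θ] at ha hnonneg ⊢
    by_cases hc : Even (norm c)
    · obtain ⟨d, rfl⟩ := two_dvd_of_even_norm hc
      simp only [map_mul, norm_ofNat] at ha hnonneg ⊢
      omega
    · rw [Int.not_even_iff_odd] at hc
      obtain ⟨k, hk⟩ := hc
      omega
  · have := norm_emod_three hmod
    omega

lemma exists_eq_mul_of_norm_lt_six {a : O} (ha : norm a < 6) :
    ∃ u c : O, norm u = 1 ∧ a = u * c ∧ (c = 0 ∨ c = 1 ∨ c = θ ∨ c = 2) := by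
  rcases norm_mem_of_le_six ha.le with h | h | h | h
  · exact ⟨1, 0, map_one norm, by simpa using h, by simp⟩
  · exact ⟨a, 1, h, (mul_one a).symm, by simp⟩
  · have hmod : modTheta a = 0 := by
      have := intCast_norm_zmod a
      rw [h] at this
      exact pow_eq_zero_iff two_ne_zero |>.1 this.symm
    obtain ⟨u, rfl⟩ := modTheta_eq_zero_iff.1 hmod
    rw [map_mul, norm_θ] at h
    exact ⟨u, θ, by omega, mul_comm _ _, by simp⟩
  · obtain ⟨u, rfl⟩ := two_dvd_of_even_norm (h ▸ by decide : Even (norm a))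
    rw [map_mul, norm_ofNat] at h
    exact ⟨u, 2, by omega, mul_comm _ _, by simp⟩

lemma exists_eq_mul_of_norm_eq {a a' : O} (ha : norm a < 6) (h : norm a' = norm a) :
    ∃ u, norm u = 1 ∧ a' = u * a := by
  obtain ⟨u, c, hu, rfl, hc⟩ := exists_eq_mul_of_norm_lt_six ha
  obtain ⟨u', c', hu', rfl, hc'⟩ := exists_eq_mul_of_norm_lt_six (h ▸ ha)
  have hcc : c' = c := by
    simp only [map_mul, hu, hu', one_mul] at h
    rcases hc with rfl | rfl | rfl | rfl <;> rcases hc' with rfl | rfl | rfl | rfl <;>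
      simp_all
  refine ⟨u' * conj u, by simp [hu, hu'], ?_⟩
  rw [hcc]
  linear_combination (-u' * c) * mul_conj_of_norm_eq_one hu

lemma exists_norm_eq_one_dvd_sub {c b : O} (hc : norm c = 1 ∨ norm c = 3)
    (hcb : θ ∣ c → ¬θ ∣ b) : ∃ ε, norm ε = 1 ∧ c ∣ b - ε := by
  rcases hc with hc | hc
  · exact ⟨1, by simp, (IsUnit.of_mul_eq_one _ (mul_conj_of_norm_eq_one hc)).dvd⟩
  have hmod : modTheta c = 0 := by
    by_contra h
    have := norm_emod_three h
    omega
  obtain ⟨u, rfl⟩ := modTheta_eq_zero_iff.1 hmod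
  have hu : IsUnit u :=
    .of_mul_eq_one _ (mul_conj_of_norm_eq_one (by rw [map_mul, norm_θ] at hc; omega))
  have hb : modTheta b = 1 ∨ modTheta b = -1 := by
    have hb0 : modTheta b ≠ 0 := fun h => hcb (dvd_mul_right θ u) (modTheta_eq_zero_iff.1 h)
    revert hb0
    generalize modTheta b = t
    revert t
    decide
  rcases hb with hb | hb
  · exact ⟨1, by simp, hu.mul_right_dvd.2 (modTheta_eq_zero_iff.1 (by simp [hb]))⟩
  · exact ⟨-1, by simp, hu.mul_right_dvd.2 (modTheta_eq_zero_iff.1 (by simp [hb]))⟩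

lemma exists_abs_two_mul_sub_le {n : ℤ} (hn : 0 < n) (m : ℤ) :
    ∃ k : ℤ, |2 * (m - n * k)| ≤ n := by
  obtain ⟨k, ⟨hlo, hhi⟩, -⟩ :=
    existsUnique_sub_zsmul_mem_Ioc (show 0 < 2 * n by omega) (2 * m) (-n)
  rw [smul_eq_mul] at hlo hhi
  exact ⟨k, abs_le.2 ⟨by linarith, by linarith⟩⟩

lemma exists_norm_sub_mul_lt (a : O) {b : O} (hb : b ≠ 0) : ∃ q, norm (a - b * q) < norm b := by
  have hpos := norm_pos hb
  obtain ⟨k, hk⟩ := exists_abs_two_mul_sub_le hpos (re (a * conj b))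
  obtain ⟨l, hl⟩ := exists_abs_two_mul_sub_le hpos (im (a * conj b))
  refine ⟨k + l * ω, lt_of_mul_lt_mul_right ?_ hpos.le⟩
  have hscale : norm (a - b * (k + l * ω)) * norm b =
      norm (a * conj b - norm b * (k + l * ω)) := by
    rw [intCast_norm, ← norm_conj b, ← map_mul]
    congr 1
    ring
  have hcoords : norm (a * conj b - norm b * (k + l * ω)) =
      (re (a * conj b) - norm b * k) ^ 2 +
        (re (a * conj b) - norm b * k) * (im (a * conj b) - norm b * l) +
        (im (a * conj b) - norm b * l) ^ 2 := by
    simp [norm_eq (a * conj b - _)]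
  rw [hscale, hcoords]
  nlinarith [sq_le_sq.2 (hk.trans (le_abs_self _)), sq_le_sq.2 (hl.trans (le_abs_self _)),
    sq_nonneg ((re (a * conj b) - norm b * k) - (im (a * conj b) - norm b * l)), mul_pos hpos hpos]

instance : IsPrincipalIdealRing O where
  principal I := by
    by_cases hI : I = ⊥
    · exact hI ▸ bot_isPrincipal
    obtain ⟨c, ⟨hcI, hc⟩, hmin⟩ := WellFounded.has_min
      (measure fun a : O => (norm a).toNat).wf {a | a ∈ I ∧ a ≠ 0} (I.ne_bot_iff.1 hI)
    refine ⟨c, le_antisymm (fun x hx => ?_) (by simpa [Ideal.span_le] using hcI)⟩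
    obtain ⟨q, hq⟩ := exists_norm_sub_mul_lt x hc
    refine Ideal.mem_span_singleton.2 ⟨q, sub_eq_zero.1 (by_contra fun hne => ?_)⟩
    refine hmin (x - c * q) ⟨I.sub_mem hx (I.mul_mem_right _ hcI), hne⟩ ?_
    exact (Int.toNat_lt_toNat (norm_pos hc)).2 hq

/-! ### Modules over the Eisenstein ring -/

section Module

variable {M : Type*} [AddCommGroup M] [Module O M]

variable (M) in
/-- Scalar multiplication by a unit of `𝒪`, given as an element of norm one. -/
def unitScaling (u : O) (hu : norm u = 1) : M ≃ₗ[O] M :=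
  LinearEquiv.ofLinearMap (u • .id) (conj u • .id)
    (by ext x; simp [smul_smul, mul_conj_of_norm_eq_one hu])
    (by ext x; simp [smul_smul, mul_comm (conj u), mul_conj_of_norm_eq_one hu])

@[simp] lemma unitScaling_apply (u : O) (hu : norm u = 1) (x : M) :
    unitScaling M u hu x = u • x := rfl

/-- The vector `z` does not lie in `𝒪r + θM`. -/
def IndepModTheta (z r : M) : Prop := ∀ (k : O) (y : M), z - k • r ≠ θ • y

lemma IndepModTheta.map {N : Type*} [AddCommGroup N] [Module O N] {z r : M}
    (h : IndepModTheta z r) (g : M ≃ₗ[O] N) : IndepModTheta (g z) (g r) := fun k y hy =>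
  h k (g.symm y) (g.injective (by simpa using hy))

lemma indepModTheta_of_linearIndependent {z r : M} (hli : LinearIndependent O ![z, r])
    (hsat : ∀ y : M, θ • y ∈ Submodule.span O {z, r} → y ∈ Submodule.span O {z, r}) :
    IndepModTheta z r := by
  intro k y hy
  obtain ⟨s, t, rfl⟩ := Submodule.mem_span_pair.1
    (hsat y (Submodule.mem_span_pair.2 ⟨1, -k, by rw [← hy]; module⟩))
  have hs : 1 - θ * s = 0 := (LinearIndependent.pair_iff.1 hli (1 - θ * s) (-k - θ * t) (by
    rw [← sub_eq_zero] at hy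
    rw [← hy]
    module)).1
  have h3 : 1 = 3 * norm s := by simpa using congrArg norm (sub_eq_zero.1 hs)
  omega

end Module

/-! ### Skew-Hermitian modules -/

/-- An `𝒪`-module with a sesquilinear form that is skew-Hermitian for conjugation.  It encodes the
Hermitian form `ψ(x, y) = θ * form x y`, so that `ψ` takes its values in `θ𝒪` by construction. -/
class SkewHermitianModule (M : Type*) [AddCommGroup M] [Module O M] where
  /-- The form `ψ / θ`. -/
  form : M → M → O
  form_add_left : ∀ x y z, form (x + y) z = form x z + form y z
  form_smul_left : ∀ (a : O) (x y), form (a • x) y = a * form x y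
  form_swap : ∀ x y, form y x = -conj (form x y)

local notation "⟪" x ", " y "⟫" => SkewHermitianModule.form x y

section SkewHermitianModule

variable {M N : Type*} [AddCommGroup M] [Module O M] [SkewHermitianModule M]
  [AddCommGroup N] [Module O N] [SkewHermitianModule N]

lemma form_swap (x y : M) : ⟪y, x⟫ = -conj ⟪x, y⟫ := SkewHermitianModule.form_swap x y

/-- The functional `x ↦ ⟪x, y⟫`. -/
def formLeft (y : M) : M →ₗ[O] O where
  toFun x := ⟪x, y⟫
  map_add' x x' := SkewHermitianModule.form_add_left x x' y
  map_smul' a x := SkewHermitianModule.form_smul_left a x y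

@[simp] lemma formLeft_apply (x y : M) : formLeft y x = ⟪x, y⟫ := rfl

@[simp] lemma form_add_left (x x' y : M) : ⟪x + x', y⟫ = ⟪x, y⟫ + ⟪x', y⟫ :=
  map_add (formLeft y) x x'
@[simp] lemma form_smul_left (a : O) (x y : M) : ⟪a • x, y⟫ = a * ⟪x, y⟫ :=
  map_smul (formLeft y) a x
@[simp] lemma form_zero_left (y : M) : ⟪0, y⟫ = 0 := map_zero (formLeft y)
@[simp] lemma form_neg_left (x y : M) : ⟪-x, y⟫ = -⟪x, y⟫ := map_neg (formLeft y) x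
@[simp] lemma form_sub_left (x x' y : M) : ⟪x - x', y⟫ = ⟪x, y⟫ - ⟪x', y⟫ :=
  map_sub (formLeft y) x x'

@[simp] lemma form_add_right (x y y' : M) : ⟪x, y + y'⟫ = ⟪x, y⟫ + ⟪x, y'⟫ := by
  simp only [form_swap _ x, form_add_left, map_add, neg_add]
@[simp] lemma form_smul_right (a : O) (x y : M) : ⟪x, a • y⟫ = conj a * ⟪x, y⟫ := by
  simp only [form_swap _ x, form_smul_left, map_mul, mul_neg]
@[simp] lemma form_zero_right (x : M) : ⟪x, 0⟫ = 0 := by simp [form_swap 0 x]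
@[simp] lemma form_neg_right (x y : M) : ⟪x, -y⟫ = -⟪x, y⟫ := by
  simp only [form_swap _ x, form_neg_left, map_neg]
@[simp] lemma form_sub_right (x y y' : M) : ⟪x, y - y'⟫ = ⟪x, y⟫ - ⟪x, y'⟫ := by
  simp only [sub_eq_add_neg, form_add_right, form_neg_right]

lemma form_eq_zero_comm {x y : M} : ⟪x, y⟫ = 0 ↔ ⟪y, x⟫ = 0 := by
  rw [form_swap x y, neg_eq_zero]
  exact ⟨fun h => by simp [h], fun h => by simpa using congrArg conj h⟩

lemma norm_form_swap (x y : M) : norm ⟪y, x⟫ = norm ⟪x, y⟫ := by simp [form_swap x y]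

lemma modTheta_form_swap (x y : M) : modTheta ⟪y, x⟫ = -modTheta ⟪x, y⟫ := by
  simp [form_swap x y]

/-- The integral quadratic form `ψ(x, x) / 3`. -/
def qnorm (x : M) : ℤ := re ⟪x, x⟫

lemma form_self (x : M) : ⟪x, x⟫ = -θ * qnorm x := by
  have h := congrArg re (form_swap x x)
  simp only [re_neg, re_conj] at h
  exact ext_re_im (by simp [qnorm]) (by simp [qnorm]; linarith)

lemma qnorm_eq_of_form_self {x : M} {n : ℤ} (h : ⟪x, x⟫ = -θ * n) : qnorm x = n :=
  intCast_injective (mul_left_cancel₀ (neg_ne_zero.2 θ_ne_zero) (form_self x ▸ h))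

lemma qnorm_eq_zero_iff_isotropic {x : M} : qnorm x = 0 ↔ ⟪x, x⟫ = 0 :=
  ⟨fun h => by simp [form_self, h], fun h => by simp [qnorm, h]⟩

@[simp] lemma qnorm_zero : qnorm (0 : M) = 0 := by simp [qnorm]
@[simp] lemma qnorm_neg (x : M) : qnorm (-x) = qnorm x := by simp [qnorm]

@[simp] lemma qnorm_smul (a : O) (x : M) : qnorm (a • x) = norm a * qnorm x := by
  apply qnorm_eq_of_form_self
  rw [form_smul_left, form_smul_right, form_self, Int.cast_mul, intCast_norm]
  ring

lemma qnorm_theta_smul_add_form_smul (x : M) {s : M} (hs : qnorm s = 1) :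
    qnorm (θ • x + ⟪x, s⟫ • s) = 3 * qnorm x - norm ⟪x, s⟫ := by
  apply qnorm_eq_of_form_self
  simp only [form_add_left, form_add_right, form_smul_left, form_smul_right]
  simp only [form_self, form_swap x s, hs, conj_θ]
  push_cast
  rw [intCast_norm]
  linear_combination (θ * (qnorm x : O)) * θ_mul_θ

lemma norm_form_le_of_qnorm_eq_one (hM : ∀ x : M, 0 ≤ qnorm x) (x : M) {s : M}
    (hs : qnorm s = 1) : norm ⟪x, s⟫ ≤ 3 * qnorm x := by
  linarith [hM (θ • x + ⟪x, s⟫ • s), qnorm_theta_smul_add_form_smul x hs]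

lemma norm_dvd_three_mul_qnorm_sub {x x' s : M} {c k : O} (hs : qnorm s = 1)
    (hx : x - k • s = c • x') : norm c ∣ 3 * qnorm x - norm ⟪x, s⟫ := by
  obtain rfl : x = c • x' + k • s := by rw [← hx, sub_add_cancel]
  have hproj : θ • (c • x' + k • s) + ⟪c • x' + k • s, s⟫ • s = c • (θ • x' + ⟪x', s⟫ • s) := by
    rw [form_add_left, form_smul_left, form_smul_left, form_self, hs]
    push_cast
    module
  rw [← qnorm_theta_smul_add_form_smul _ hs, hproj, qnorm_smul]
  exact dvd_mul_right _ _

lemma exists_dvd_iff_exists_form_eq (x s : M) :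
    ∃ c, ∀ t, c ∣ t ↔ ∃ w, ⟪s, w⟫ = 0 ∧ ⟪x, w⟫ = t := by
  obtain ⟨c, hc⟩ := (IsPrincipalIdealRing.principal
    ((LinearMap.ker (formLeft s)).map (formLeft x) : Ideal O)).principal
  refine ⟨conj c, fun t => ?_⟩
  have hdvd : conj c ∣ t ↔ c ∣ -conj t := by
    rw [dvd_neg]
    exact ⟨fun h => by simpa using map_dvd conj h, fun h => by simpa using map_dvd conj h⟩
  rw [hdvd, ← Ideal.mem_span_singleton, ← Ideal.submodule_span_eq, ← hc, Submodule.mem_map]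
  refine exists_congr fun w => and_congr form_eq_zero_comm ?_
  rw [formLeft_apply, form_swap x w, neg_inj]
  exact ⟨fun h => by simpa using congrArg conj h, congrArg conj⟩

variable (M) in
/-- The unitary group of `M`. -/
def isometryGroup : Subgroup (M ≃ₗ[O] M) where
  carrier := {g | ∀ x y, ⟪g x, g y⟫ = ⟪x, y⟫}
  one_mem' _ _ := rfl
  mul_mem' hg hh x y := (hg _ _).trans (hh x y)
  inv_mem' {g} hg x y := by
    simpa using (hg (g.symm x) (g.symm y)).symm

lemma form_map {g : M ≃ₗ[O] M} (hg : g ∈ isometryGroup M) (x y : M) : ⟪g x, g y⟫ = ⟪x, y⟫ :=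
  hg x y

lemma qnorm_map {g : M ≃ₗ[O] M} (hg : g ∈ isometryGroup M) (x : M) : qnorm (g x) = qnorm x :=
  congrArg re (hg x x)

lemma unitScaling_mem_isometryGroup (u : O) (hu : norm u = 1) :
    unitScaling M u hu ∈ isometryGroup M := fun x y => by
  simp only [unitScaling_apply, form_smul_left, form_smul_right]
  linear_combination ⟪x, y⟫ * mul_conj_of_norm_eq_one hu

/-- The complex reflection of order three in a vector `s` of norm `ψ(s, s) = 3`. -/
def triflection (s : M) (hs : qnorm s = 1) : M ≃ₗ[O] M :=
  LinearEquiv.dilatransvection (f := conj ω • formLeft s) (v := s) <|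
    IsUnit.of_mul_eq_one (-conj ω) (by
      simp only [LinearMap.smul_apply, formLeft_apply, form_self, hs, θ_eq, conj_ω, smul_eq_mul,
        Int.cast_one]
      linear_combination (2 * ω - 3) * ω_mul_ω)

lemma triflection_apply (s : M) (hs : qnorm s = 1) (y : M) :
    triflection s hs y = y + (conj ω * ⟪y, s⟫) • s := rfl

lemma triflection_mem_isometryGroup (s : M) (hs : qnorm s = 1) :
    triflection s hs ∈ isometryGroup M := fun x y => by
  simp only [triflection_apply, form_add_left, form_add_right, form_smul_left, form_smul_right,
    map_mul, conj_conj]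
  simp only [form_self, form_swap y s, hs, θ_eq, conj_ω]
  push_cast
  linear_combination (⟪x, s⟫ * conj ⟪y, s⟫ * (2 * ω - 1)) * ω_mul_ω

lemma exists_isometry_of_norm_form_eq_one {r r' : M} (hr : qnorm r = 1) (hr' : qnorm r' = 1)
    (h : norm ⟪r, r'⟫ = 1) : ∃ g ∈ isometryGroup M, g r = r' := by
  have hk := mul_conj_of_norm_eq_one h
  have hu : norm (ω * ⟪r, r'⟫) = 1 := by rw [map_mul, norm_ω, h, one_mul]
  -- the triflection in `s` maps `r` to `r + s`
  set s := (ω * ⟪r, r'⟫) • r' - r with hs_def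
  have hs : qnorm s = 1 := by
    apply qnorm_eq_of_form_self
    simp only [hs_def, form_sub_left, form_sub_right, form_smul_left, form_smul_right]
    simp only [form_self, form_swap r r', hr, hr', map_mul, θ_eq, conj_ω]
    push_cast
    linear_combination (-(2 * ω - 1) * ω * (1 - ω) - (1 - ω) + ω) * hk + (2 * ω - 1) * ω_mul_ω
  have hrs : ⟪r, s⟫ = ω := by
    simp only [hs_def, form_sub_right, form_smul_right, form_self, hr, map_mul, θ_eq, conj_ω]
    push_cast
    linear_combination (1 - ω) * hk
  refine ⟨unitScaling M _ ((norm_conj _).trans hu) * triflection s hs,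
    mul_mem (unitScaling_mem_isometryGroup _ _) (triflection_mem_isometryGroup s hs), ?_⟩
  have hω : conj ω * ω = 1 := by rw [conj_ω]; linear_combination -ω_mul_ω
  rw [LinearEquiv.mul_apply, triflection_apply, hrs, hω, one_smul, hs_def, add_sub_cancel,
    unitScaling_apply, smul_smul, mul_comm, mul_conj_of_norm_eq_one hu, one_smul]

/-- An explicit form of Witt's theorem, moving `e` by the reflection that takes `a` to `b`. -/
lemma exists_isotropic_orthogonal [Module.IsTorsionFree O M] {a b c e : M}
    (hab : ⟪a, a⟫ = ⟪b, b⟫) (hac : ⟪a, c⟫ = ⟪b, c⟫) (he : e ≠ 0) (hee : ⟪e, e⟫ = 0)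
    (hea : ⟪e, a⟫ = 0) (hec : ⟪e, c⟫ = 0) :
    ∃ e' : M, e' ≠ 0 ∧ ⟪e', e'⟫ = 0 ∧ ⟪e', b⟫ = 0 ∧ ⟪e', c⟫ = 0 := by
  set s := b - a with hs
  have hsc : ⟪s, c⟫ = 0 := by simp [hs, hac]
  have hsa : ⟪s, a⟫ = conj ⟪s, b⟫ := by
    simp only [hs, form_sub_left, map_sub, hab]
    linear_combination form_swap a b - form_swap b b
  have hss : ⟪s, s⟫ = ⟪s, b⟫ - ⟪s, a⟫ := form_sub_right s b a
  have hes : ⟪e, s⟫ = ⟪e, b⟫ := by simp [hs, hea]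
  by_cases hsb : ⟪s, b⟫ = 0
  · rcases eq_or_ne s 0 with h0 | h0
    · exact ⟨e, he, hee, by rw [← hes, h0, form_zero_right], hec⟩
    · exact ⟨s, h0, by simp [hss, hsa, hsb], hsb, hsc⟩
  -- otherwise the reflection of `e` in `s`, scaled by `-⟪s, b⟫`, is orthogonal to `b`
  refine ⟨(-⟪s, b⟫) • e + ⟪e, s⟫ • s, fun h => ?_, ?_, ?_, by simp [hec, hsc]⟩
  · have hprod : ⟪e, s⟫ * conj ⟪s, b⟫ = 0 := by
      simpa [hea, hsa] using congrArg (formLeft a) h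
    have hes0 : ⟪e, s⟫ = 0 := (mul_eq_zero.1 hprod).resolve_right fun h' =>
      hsb (by simpa using congrArg conj h')
    rw [hes0, zero_smul, add_zero] at h
    exact (smul_eq_zero.1 h).elim (fun h' => hsb (neg_eq_zero.1 h')) he
  · simp only [form_add_left, form_add_right, form_smul_left, form_smul_right, hee, form_swap e s,
      hss, hsa, map_neg]
    ring
  · simp only [form_add_left, form_smul_left, hes]
    ring

instance : SkewHermitianModule (M × N) where
  form v w := ⟪v.1, w.1⟫ + ⟪v.2, w.2⟫
  form_add_left _ _ _ := by simp only [Prod.fst_add, Prod.snd_add, form_add_left]; ring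
  form_smul_left _ _ _ := by simp only [Prod.smul_fst, Prod.smul_snd, form_smul_left]; ring
  form_swap v w := by rw [form_swap v.1, form_swap v.2, map_add]; ring

lemma form_prod (v w : M × N) : ⟪v, w⟫ = ⟪v.1, w.1⟫ + ⟪v.2, w.2⟫ := rfl

lemma qnorm_prod (v : M × N) : qnorm v = qnorm v.1 + qnorm v.2 := re_add _ _

lemma prodCongr_mem_isometryGroup {g : M ≃ₗ[O] M} {h : N ≃ₗ[O] N} (hg : g ∈ isometryGroup M)
    (hh : h ∈ isometryGroup N) : g.prodCongr h ∈ isometryGroup (M × N) := fun v w => by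
  simp only [form_prod, LinearEquiv.prodCongr_apply, form_map hg, form_map hh]

lemma prodComm_mem_isometryGroup : LinearEquiv.prodComm O M M ∈ isometryGroup (M × M) :=
  fun _ _ => add_comm _ _

end SkewHermitianModule

/-! ### Adding a hyperbolic plane -/

/-- The hyperbolic plane `H_𝒪`, with `form e f = 1` for its standard basis. -/
abbrev HyperbolicPlane : Type := O × O

instance : SkewHermitianModule HyperbolicPlane where
  form v w := v.1 * conj w.2 - v.2 * conj w.1
  form_add_left _ _ _ := by simp only [Prod.fst_add, Prod.snd_add]; ring
  form_smul_left _ _ _ := by simp only [Prod.smul_fst, Prod.smul_snd, smul_eq_mul]; ring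
  form_swap _ _ := by simp only [map_sub, map_mul, conj_conj]; ring

lemma form_plane (v w : HyperbolicPlane) : ⟪v, w⟫ = v.1 * conj w.2 - v.2 * conj w.1 := rfl

lemma qnorm_plane (v : HyperbolicPlane) : qnorm v = -im (v.1 * conj v.2) := by
  simp [qnorm, form_plane]; ring

/-- The isometry `(p, q) ↦ (-q, p)` of the hyperbolic plane. -/
def planeSwap : HyperbolicPlane ≃ₗ[O] HyperbolicPlane :=
  LinearEquiv.skewSwap O O O

@[simp] lemma planeSwap_apply (v : HyperbolicPlane) : planeSwap v = (-v.2, v.1) := rfl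

lemma planeSwap_mem_isometryGroup : planeSwap ∈ isometryGroup HyperbolicPlane := fun v w => by
  simp only [planeSwap_apply, form_plane, map_neg]; ring

section Hyperbolic

variable {F : Type*} [AddCommGroup F] [Module O F] [SkewHermitianModule F]

/-- The underlying map of `translation`. -/
def translationFun (w : F) (s : ℤ) (v : F × HyperbolicPlane) : F × HyperbolicPlane :=
  (v.1 + v.2.2 • w, (v.2.1 + v.2.2 * (s + qnorm w * ω) - ⟪v.1, w⟫, v.2.2))

lemma translationFun_neg_translationFun (w : F) (s : ℤ) (v : F × HyperbolicPlane) :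
    translationFun (-w) (-s - qnorm w) (translationFun w s v) = v := by
  obtain ⟨x, p, q⟩ := v
  simp only [translationFun, qnorm_neg, smul_neg, add_neg_cancel_right, form_neg_right,
    form_add_left, form_smul_left, form_self, Prod.mk.injEq, true_and, and_true, θ_eq]
  push_cast
  ring

/-- The Eichler transvection (Heisenberg translation) fixing the null vector `e` of the hyperbolic
plane and sending `f` to `w + (s + qnorm w * ω) e + f`. -/
def translation (w : F) (s : ℤ) : (F × HyperbolicPlane) ≃ₗ[O] (F × HyperbolicPlane) where
  toFun := translationFun w s
  invFun := translationFun (-w) (-s - qnorm w)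
  map_add' x y := by
    simp only [translationFun, Prod.fst_add, Prod.snd_add, form_add_left, Prod.mk_add_mk,
      Prod.mk.injEq]
    exact ⟨by module, by ring, trivial⟩
  map_smul' a x := by
    simp only [translationFun, Prod.smul_fst, Prod.smul_snd, form_smul_left, Prod.smul_mk,
      Prod.mk.injEq, RingHom.id_apply, smul_eq_mul]
    exact ⟨by module, by ring, trivial⟩
  left_inv := translationFun_neg_translationFun w s
  right_inv v := by
    simpa using translationFun_neg_translationFun (-w) (-s - qnorm w) v

lemma translation_apply (w : F) (s : ℤ) (x : F) (p q : O) :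
    translation w s (x, (p, q)) = (x + q • w, (p + q * (s + qnorm w * ω) - ⟪x, w⟫, q)) := rfl

lemma translation_zero_apply (s : ℤ) (x : F) (p q : O) :
    translation 0 s (x, (p, q)) = (x, (p + q * s, q)) := by
  simp [translation_apply]

lemma translation_mem_isometryGroup (w : F) (s : ℤ) :
    translation w s ∈ isometryGroup (F × HyperbolicPlane) := by
  rintro ⟨x, p, q⟩ ⟨y, p', q'⟩
  simp only [translation_apply, form_prod, form_plane, map_add, map_sub, form_add_left,
    form_add_right, form_smul_left, form_smul_right, form_self, form_swap y w, map_mul,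
    conj_intCast, conj_ω, θ_eq]
  ring

/-- Swapping the two null lines and translating by `y - x`. -/
lemma exists_isometry_eq_of_norm_eq_one {r x y : F} {ε : O} (hε : norm ε = 1)
    (hxy : ⟪r, y⟫ = ⟪r, x⟫) :
    ∃ g ∈ isometryGroup (F × HyperbolicPlane), g (r, 0) = (r, 0) ∧
      g (x, (ε, 0)) = (y, ((qnorm y - qnorm x : ℤ) * ω, 1)) := by
  set g := translation (y - x) (re ⟪x, y - x⟫) *
    (LinearEquiv.refl O F).prodCongr (unitScaling _ (conj ε) ((norm_conj ε).trans hε) * planeSwap)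
  have hg : g ∈ isometryGroup (F × HyperbolicPlane) :=
    mul_mem (translation_mem_isometryGroup _ _) (prodCongr_mem_isometryGroup (one_mem _)
      (mul_mem (unitScaling_mem_isometryGroup _ _) planeSwap_mem_isometryGroup))
  obtain ⟨p, hp, hre⟩ : ∃ p, g (x, (ε, 0)) = (y, (p, 1)) ∧ re p = 0 := by
    have hmid : (LinearEquiv.refl O F).prodCongr (unitScaling _ (conj ε)
        ((norm_conj ε).trans hε) * planeSwap) (x, (ε, 0)) = (x, (0, 1)) := by
      simp [mul_comm (conj ε), mul_conj_of_norm_eq_one hε]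
    refine ⟨_, by rw [LinearEquiv.mul_apply, hmid, translation_apply, one_smul,
      add_sub_cancel], ?_⟩
    simp
  refine ⟨g, hg, ?_, ?_⟩
  · simp [g, LinearEquiv.mul_apply, ← Prod.mk_zero_zero, translation_apply, hxy]
  · have hQ := qnorm_map hg (x, (ε, 0))
    simp only [hp, qnorm_prod, qnorm_plane, map_one, mul_one, map_zero, mul_zero, im_zero] at hQ
    have him : im p = qnorm y - qnorm x := by linarith
    rw [hp, eq_re_add_im p, hre, him, Int.cast_zero, zero_add]

end Hyperbolic

/-! ### The covering radius of `E₈` -/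

/-- The lattice `E₈`, scaled by two to make its coordinates integral. -/
def latticeE8 : AddSubgroup (Fin 8 → ℤ) where
  carrier := {m | (∀ i j, 2 ∣ m i - m j) ∧ 4 ∣ ∑ i, m i}
  zero_mem' := by simp
  add_mem' {x y} hx hy := by
    refine ⟨fun i j => ?_, by simpa [Finset.sum_add_distrib] using dvd_add hx.2 hy.2⟩
    simpa [add_sub_add_comm] using dvd_add (hx.1 i j) (hy.1 i j)
  neg_mem' {x} hx := ⟨fun i j => by simpa [neg_add_eq_sub] using hx.1 j i, by simpa using hx.2⟩

lemma mem_latticeE8 {m : Fin 8 → ℤ} :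
    m ∈ latticeE8 ↔ (∀ i j, 2 ∣ m i - m j) ∧ 4 ∣ ∑ i, m i := Iff.rfl

lemma two_nsmul_mem_latticeE8 {k : Fin 8 → ℤ} (hk : Even (∑ i, k i)) : 2 • k ∈ latticeE8 := by
  refine mem_latticeE8.2 ⟨fun i j => ⟨k i - k j, by simp [mul_sub]⟩, ?_⟩
  obtain ⟨c, hc⟩ := hk
  exact ⟨c, by simp [← Finset.mul_sum, hc]; ring⟩

lemma one_mem_latticeE8 : 1 ∈ latticeE8 := mem_latticeE8.2 ⟨by simp, by decide⟩

section Rounding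

variable {n : ℤ} {y k r : Fin 8 → ℤ}

lemma sum_sub_mul_two_nsmul_sq (hy : ∀ i, y i = 2 * n * k i + r i) :
    ∑ i, (y i - n * (2 • k) i) ^ 2 = ∑ i, r i ^ 2 := by
  refine Finset.sum_congr rfl fun i _ => ?_
  simp only [hy, Pi.smul_apply, nsmul_eq_mul, Nat.cast_ofNat]
  ring

/-- If the nearest point `2k` of `(2ℤ)⁸` is not in the lattice, change its coordinate `i`. -/
lemma exists_mem_latticeE8_sum_sq_le (hn : 0 ≤ n) (hy : ∀ i, y i = 2 * n * k i + r i)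
    (hr : ∀ i, |r i| ≤ n) (i : Fin 8) :
    ∃ m ∈ latticeE8, ∑ j, (y j - n * m j) ^ 2 ≤ ∑ j, r j ^ 2 + 4 * n ^ 2 - 4 * n * |r i| := by
  by_cases hk : Even (∑ j, k j)
  · refine ⟨2 • k, two_nsmul_mem_latticeE8 hk, ?_⟩
    rw [sum_sub_mul_two_nsmul_sq hy]
    nlinarith [hr i]
  obtain ⟨s, hs, hsr⟩ : ∃ s : ℤ, (s = 1 ∨ s = -1) ∧ s * r i = |r i| := by
    rcases abs_choice (r i) with h | h
    · exact ⟨1, by simp, by simp [h]⟩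
    · exact ⟨-1, by simp, by simp [h]⟩
  set e : Fin 8 → ℤ := Pi.single i s with he
  have hflip : Even (∑ j, (k + e) j) := by
    simp only [he, Pi.add_apply, Finset.sum_add_distrib, Finset.sum_pi_single', Finset.mem_univ,
      if_true]
    exact (Int.not_even_iff_odd.1 hk).add_odd (by rcases hs with rfl | rfl <;> decide)
  refine ⟨_, two_nsmul_mem_latticeE8 hflip, le_of_eq ?_⟩
  rw [sum_sub_mul_two_nsmul_sq (r := fun j => r j - 2 * n * e j)
    fun j => by rw [hy, Pi.add_apply]; ring]
  have hterm (j) : (r j - 2 * n * e j) ^ 2 =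
      r j ^ 2 + Pi.single (M := fun _ => ℤ) i (4 * n ^ 2 - 4 * n * |r i|) j := by
    rcases eq_or_ne j i with rfl | h
    · have hs2 : s ^ 2 = 1 := by rcases hs with rfl | rfl <;> norm_num
      simp only [he, Pi.single_eq_same, ← hsr]
      linear_combination 4 * n ^ 2 * hs2
    · simp [he, h]
  simp only [hterm, Finset.sum_add_distrib, Finset.sum_pi_single', Finset.mem_univ, if_true]
  ring

lemma sum_sub_mul_sub (U : Fin 8 → ℤ) (c d : ℤ) : ∑ j, (c - U j) * (U j - d) =
    (c + d) * ∑ j, U j - 8 * (c * d) - ∑ j, U j ^ 2 := by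
  have h (j) : (c - U j) * (U j - d) = (c + d) * U j - c * d - U j ^ 2 := by ring
  simp [h, Finset.sum_sub_distrib, Finset.mul_sum]

lemma sum_sub_sq (U : Fin 8 → ℤ) (c : ℤ) :
    ∑ j, (c - U j) ^ 2 = 8 * c ^ 2 - 2 * c * ∑ j, U j + ∑ j, U j ^ 2 := by
  have h := sum_sub_mul_sub U c c
  simp only [fun j => show (c - U j) * (U j - c) = -(c - U j) ^ 2 by ring,
    Finset.sum_neg_distrib] at h
  linarith

section Extremal

variable {U : Fin 8 → ℤ} (hn : 0 < n) (hU0 : ∀ i, 0 ≤ U i) (hUn : ∀ i, U i ≤ n)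
  (hfar : ∀ i, 4 * n * U i ≤ ∑ j, U j ^ 2)
  (hfar' : ∀ i, 4 * n * (n - U i) ≤ ∑ j, (n - U j) ^ 2)

include hn hU0 hUn hfar hfar'

lemma constant_or_exists_eq_and_eq_zero :
    (∃ c, ∀ i, U i = c) ∨ ∃ a b, U a = n ∧ U b = 0 := by
  obtain ⟨a, -, ha⟩ := Finset.exists_max_image Finset.univ U Finset.univ_nonempty
  obtain ⟨b, -, hb⟩ := Finset.exists_min_image Finset.univ U Finset.univ_nonempty
  have hchord : 0 ≤ ∑ j, (U a - U j) * (U j - U b) := Finset.sum_nonneg fun j hj =>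
    mul_nonneg (sub_nonneg.2 (ha j hj)) (sub_nonneg.2 (hb j hj))
  rw [sum_sub_mul_sub] at hchord
  have hba : U b ≤ U a := hb a (Finset.mem_univ a)
  have hspread : 0 ≤ 4 * n * ((U a - U b) * (U a - U b - n)) := by
    have h1 := mul_nonneg (show 0 ≤ 2 * n - U a - U b by linarith [hUn a, hUn b])
      (sub_nonneg.2 (hfar a))
    have h2 := mul_nonneg (add_nonneg (hU0 a) (hU0 b)) (sub_nonneg.2 (hfar' b))
    rw [sum_sub_sq] at h2
    linarith [mul_nonneg hn.le hchord]
  rcases hba.eq_or_lt with heq | hlt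
  · exact .inl ⟨U a, fun i =>
      le_antisymm (ha i (Finset.mem_univ i)) (heq ▸ hb i (Finset.mem_univ i))⟩
  · have : n ≤ U a - U b := sub_nonneg.1 <| nonneg_of_mul_nonneg_right
      (nonneg_of_mul_nonneg_right hspread (by omega)) (sub_pos.2 hlt)
    exact .inr ⟨a, b, by linarith [hUn a, hU0 b], by linarith [hUn a, hU0 b]⟩

/-- The deep holes of `E₈`, described by the distances of their coordinates to `2nℤ`. -/
lemma eq_zero_or_eq_or_two_mul_eq :
    (∃ i, 4 * n * U i = ∑ j, U j ^ 2 ∨ 4 * n * (n - U i) = ∑ j, (n - U j) ^ 2) ∧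
      (((∀ i, U i = 0 ∨ U i = n) ∧ 4 * n ∣ ∑ i, U i) ∨ ∀ i, 2 * U i = n) := by
  obtain ⟨c, hc⟩ | ⟨a, b, ha, hb⟩ := constant_or_exists_eq_and_eq_zero hn hU0 hUn hfar hfar'
  · have h0 := hU0 0
    have h1 := hUn 0
    have h2 := hfar 0
    have h3 := hfar' 0
    simp only [hc, Finset.sum_const, Finset.card_univ, Fintype.card_fin, nsmul_eq_mul,
      Nat.cast_ofNat] at h0 h1 h2 h3 ⊢
    rcases h0.eq_or_lt with rfl | hpos
    · simp
    rcases h1.eq_or_lt with rfl | hlt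
    · exact ⟨⟨0, .inr (by simp)⟩, .inl ⟨by simp, 2, by ring⟩⟩
    · have hmid : 2 * c = n := by nlinarith
      exact ⟨⟨0, .inl (by rw [← hmid]; ring)⟩, .inr fun _ => hmid⟩
  · have hchord : ∑ j, (n - U j) * (U j - 0) = n * ∑ j, U j - ∑ j, U j ^ 2 := by
      rw [sum_sub_mul_sub]; ring
    have hterm (j) : 0 ≤ (n - U j) * (U j - 0) :=
      mul_nonneg (sub_nonneg.2 (hUn j)) (sub_nonneg.2 (hU0 j))
    have h1 := hfar a
    have h2 := hfar' b
    rw [ha] at h1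
    rw [hb, sum_sub_sq] at h2
    have hnonneg := Finset.sum_nonneg fun j (_ : j ∈ Finset.univ) => hterm j
    have hS : ∑ j, U j = 4 * n := mul_left_cancel₀ hn.ne' (by linarith)
    refine ⟨⟨a, .inl (by rw [ha]; linarith)⟩, .inl ⟨fun i => ?_, 1, by simp [hS]⟩⟩
    have hzero := (Finset.sum_eq_zero_iff_of_nonneg fun j _ => hterm j).1 (by linarith) i
      (Finset.mem_univ i)
    rcases mul_eq_zero.1 hzero with h | h
    · exact .inr (sub_eq_zero.1 h).symm
    · exact .inl (sub_eq_zero.1 h)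

end Extremal

lemma exists_shifted_rounding (hy : ∀ i, y i = 2 * n * k i + r i) (hr : ∀ i, |r i| ≤ n) :
    ∃ k' r' : Fin 8 → ℤ, (∀ i, y i - n = 2 * n * k' i + r' i) ∧ (∀ i, |r' i| = n - |r i|) ∧
      ∀ i, 2 * |r i| = n → r' i = -r i := by
  refine ⟨fun i => if 0 ≤ r i then k i else k i - 1, fun i => if 0 ≤ r i then r i - n else r i + n,
    fun i => ?_, fun i => ?_, fun i => ?_⟩ <;> have := hr i <;> dsimp only <;> split_ifs with h
  · rw [hy]; ring
  · rw [hy]; ring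
  · rw [abs_of_nonneg h] at *; rw [abs_of_nonpos (by omega)]; omega
  · rw [abs_of_neg (not_le.1 h)] at *; rw [abs_of_nonneg (by omega)]; omega
  · rw [abs_of_nonneg h]; omega
  · rw [abs_of_neg (not_le.1 h)]; omega

lemma exists_mem_latticeE8_sum_sub_one_sq_le (hn : 0 ≤ n)
    (hy : ∀ i, y i - n = 2 * n * k i + r i) (hr : ∀ i, |r i| ≤ n) (i : Fin 8) :
    ∃ m ∈ latticeE8, ∑ j, (y j - n * m j) ^ 2 ≤ ∑ j, r j ^ 2 + 4 * n ^ 2 - 4 * n * |r i| := by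
  obtain ⟨m, hm, hle⟩ := exists_mem_latticeE8_sum_sq_le hn hy hr i
  refine ⟨m + 1, add_mem hm one_mem_latticeE8, hle.trans_eq' ?_⟩
  exact Finset.sum_congr rfl fun j _ => by simp only [Pi.add_apply, Pi.one_apply]; ring

lemma exists_two_mul_eq_of_abs_eq_zero_or_eq (hn : n ≠ 0) (hy : ∀ i, y i = 2 * n * k i + r i)
    (hr : ∀ i, |r i| = 0 ∨ |r i| = n) (hdvd : 4 * n ∣ ∑ i, |r i|) :
    ∃ m ∈ latticeE8, ∀ i, 2 * y i = n * m i := by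
  have hsign (i) : ∃ e : ℤ, r i = n * e ∧ |r i| = n * |e| := by
    rcases hr i with h | h
    · exact ⟨0, by simpa using h, by simpa using h⟩
    · rcases abs_choice (r i) with h' | h'
      · exact ⟨1, by linarith, by simpa using h⟩
      · exact ⟨-1, by linarith, by simpa using h⟩
  choose e he heabs using hsign
  have hsum : Even (∑ i, |e i|) := by
    simp only [heabs, ← Finset.mul_sum, mul_comm (4 : ℤ)] at hdvd
    exact even_iff_two_dvd.2 (dvd_trans (by norm_num) (Int.dvd_of_mul_dvd_mul_left hn hdvd))
  refine ⟨2 • (2 • k + e), two_nsmul_mem_latticeE8 ?_, fun i => ?_⟩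
  · have hparity : Even (∑ i, |e i| - ∑ i, e i) := by
      rw [← Finset.sum_sub_distrib]
      exact Finset.even_sum _ fun i _ => Int.even_sub.2 even_abs
    simp only [Pi.add_apply, Finset.sum_add_distrib, Pi.smul_apply, ← Finset.smul_sum]
    rw [nsmul_eq_mul]
    exact (even_two_mul _).add ((Int.even_sub.1 hparity).1 hsum)
  · simp only [hy, he, Pi.smul_apply, Pi.add_apply]
    simp only [nsmul_eq_mul, Nat.cast_ofNat]
    ring

lemma exists_two_mul_eq_of_two_mul_abs_eq {k' r' : Fin 8 → ℤ}
    (hy : ∀ i, y i = 2 * n * k i + r i) (hy' : ∀ i, y i - n = 2 * n * k' i + r' i)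
    (hr : ∀ i, r' i = -r i) (hk : ¬Even (∑ i, k i)) (hk' : ¬Even (∑ i, k' i)) :
    ∃ m ∈ latticeE8, ∀ i, 2 * y i = n * m i := by
  refine ⟨2 • (k + k') + 1, add_mem (two_nsmul_mem_latticeE8 ?_) one_mem_latticeE8, fun i => ?_⟩
  · simpa only [Pi.add_apply, Finset.sum_add_distrib] using
      (Int.not_even_iff_odd.1 hk).add_odd (Int.not_even_iff_odd.1 hk')
  · simp only [Pi.add_apply, Pi.smul_apply, Pi.one_apply]
    simp only [nsmul_eq_mul, Nat.cast_ofNat]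
    linear_combination hy i + hy' i + hr i

lemma not_even_sum_of_two_mul_abs_eq (hn : 0 < n) (hy : ∀ i, y i = 2 * n * k i + r i)
    (hr : ∀ i, 2 * |r i| = n) (hfar : ∀ m ∈ latticeE8, 4 * n ^ 2 ≤ ∑ i, (y i - n * m i) ^ 2) :
    ¬Even (∑ i, k i) := fun hk => by
  have hle := hfar _ (two_nsmul_mem_latticeE8 hk)
  rw [sum_sub_mul_two_nsmul_sq hy] at hle
  have hsum : ∑ i, (2 * |r i|) ^ 2 = ∑ _i : Fin 8, n ^ 2 :=
    Finset.sum_congr rfl fun i _ => by rw [hr]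
  simp only [mul_pow, sq_abs, ← Finset.mul_sum, Finset.sum_const, Finset.card_univ,
    Fintype.card_fin, nsmul_eq_mul, Nat.cast_ofNat] at hsum
  linarith [pow_pos hn 2]

/-- The covering radius of `E₈`; the equality case is that of the deep holes. -/
theorem exists_latticeE8_sum_sq_lt_or_eq (hn : 0 < n) (y : Fin 8 → ℤ) :
    ∃ m ∈ latticeE8, ∑ i, (y i - n * m i) ^ 2 < 4 * n ^ 2 ∨ ∑ i, (y i - n * m i) ^ 2 = 4 * n ^ 2 ∧
      ∃ m' ∈ latticeE8, ∀ i, 2 * y i = n * m' i := by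
  by_cases! hfar : ∃ m ∈ latticeE8, ∑ i, (y i - n * m i) ^ 2 < 4 * n ^ 2
  · obtain ⟨m, hm, hlt⟩ := hfar
    exact ⟨m, hm, .inl hlt⟩
  choose k hk using fun i => exists_abs_two_mul_sub_le (n := 2 * n) (by omega) (y i)
  set r := fun i => y i - 2 * n * k i
  have hy (i) : y i = 2 * n * k i + r i := by simp [r]
  have hr (i) : |r i| ≤ n := by simpa [abs_mul] using hk i
  obtain ⟨k', r', hy', hr', hneg⟩ := exists_shifted_rounding hy hr
  have hle := exists_mem_latticeE8_sum_sq_le hn.le hy hr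
  have hle' := exists_mem_latticeE8_sum_sub_one_sq_le hn.le hy' fun i => by
    linarith [hr' i, abs_nonneg (r i)]
  simp only [← sq_abs (r _), ← sq_abs (r' _), hr'] at hle hle'
  obtain ⟨⟨i, htight⟩, hprofile⟩ := eq_zero_or_eq_or_two_mul_eq hn (fun i => abs_nonneg (r i)) hr
    (fun i => by obtain ⟨m, hm, h⟩ := hle i; linarith [hfar m hm])
    (fun i => by obtain ⟨m, hm, h⟩ := hle' i; linarith [hfar m hm])
  obtain ⟨m, hm, hmle⟩ : ∃ m ∈ latticeE8, ∑ i, (y i - n * m i) ^ 2 ≤ 4 * n ^ 2 := by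
    rcases htight with h | h
    · obtain ⟨m, hm, hmle⟩ := hle i
      exact ⟨m, hm, by linarith⟩
    · obtain ⟨m, hm, hmle⟩ := hle' i
      exact ⟨m, hm, by linarith⟩
  refine ⟨m, hm, .inr ⟨hmle.antisymm (hfar m hm), ?_⟩⟩
  rcases hprofile with ⟨hr0, hdvd⟩ | hhalf
  · exact exists_two_mul_eq_of_abs_eq_zero_or_eq hn.ne' hy hr0 hdvd
  · refine exists_two_mul_eq_of_two_mul_abs_eq hy hy' (fun i => hneg i (hhalf i))
      (not_even_sum_of_two_mul_abs_eq hn hy hhalf hfar)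
      (not_even_sum_of_two_mul_abs_eq hn hy' (fun i => by linarith [hr' i, hhalf i]) fun m hm => ?_)
    refine (hfar _ (add_mem hm one_mem_latticeE8)).trans_eq (Finset.sum_congr rfl fun i _ => ?_)
    simp only [Pi.add_apply, Pi.one_apply]
    ring

end Rounding

/-! ### The lattice `Λ⁴` -/

/-- The lattice `Λ⁴`, whose underlying `ℤ`-lattice is `E₈`. -/
abbrev Lambda4 : Type := Fin 4 → O

instance : SkewHermitianModule Lambda4 where
  form x y := -θ * (x 0 * conj (y 0) + x 1 * conj (y 1) + x 2 * conj (y 2) + x 3 * conj (y 3))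
    + x 0 * conj (y 1) - x 1 * conj (y 0) + x 1 * conj (y 2) - x 2 * conj (y 1)
    + x 2 * conj (y 3) - x 3 * conj (y 2)
  form_add_left _ _ _ := by simp only [Pi.add_apply]; ring
  form_smul_left _ _ _ := by simp only [Pi.smul_apply, smul_eq_mul]; ring
  form_swap _ _ := by
    simp only [map_add, map_sub, map_mul, map_neg, conj_conj, conj_θ]
    ring

namespace Lambda4

lemma form_eq (x y : Lambda4) : ⟪x, y⟫ =
    -θ * (x 0 * conj (y 0) + x 1 * conj (y 1) + x 2 * conj (y 2) + x 3 * conj (y 3))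
      + x 0 * conj (y 1) - x 1 * conj (y 0) + x 1 * conj (y 2) - x 2 * conj (y 1)
      + x 2 * conj (y 3) - x 3 * conj (y 2) := rfl

lemma qnorm_eq (x : Lambda4) : qnorm x = norm (x 0) + norm (x 1) + norm (x 2) + norm (x 3)
    - im (x 0 * conj (x 1)) - im (x 1 * conj (x 2)) - im (x 2 * conj (x 3)) := by
  simp only [qnorm, form_eq, norm_eq, re_add, re_sub, re_neg, re_mul, re_θ, re_conj, im_add, im_neg,
    im_mul, im_θ, im_conj]
  ring

/-- Integral coordinates identifying `Λ⁴` with `E₈`. -/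
def coords : Lambda4 →+ (Fin 8 → ℤ) where
  toFun x := ![
    2 * re (x 0) + 2 * im (x 0) - 2 * re (x 1) - im (x 2),
    2 * re (x 0) + 2 * re (x 1) + 2 * im (x 1) + im (x 2),
    2 * im (x 0) + im (x 2),
    2 * im (x 1) - 2 * re (x 2) - im (x 2),
    2 * re (x 2) + im (x 2) + 2 * im (x 3),
    im (x 2) - 2 * re (x 3) - 2 * im (x 3),
    im (x 2) - 2 * re (x 3),
    im (x 2)]
  map_zero' := by ext j; fin_cases j <;> simp
  map_add' x y := by ext j; fin_cases j <;> simp <;> ring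

lemma eight_mul_qnorm (x : Lambda4) : 8 * qnorm x = ∑ j, coords x j ^ 2 := by
  simp only [qnorm_eq, norm_eq, im_mul, im_conj, mul_neg, re_conj, coords, AddMonoidHom.coe_mk,
    ZeroHom.coe_mk, Fin.sum_univ_eight, Matrix.cons_val_zero, Matrix.cons_val_one, Matrix.cons_val]
  ring

lemma coords_injective : Function.Injective coords := fun x y h => by
  have h (j) : coords x j = coords y j := congrFun h j
  have h0 := h 0; have h1 := h 1; have h2 := h 2; have h3 := h 3
  have h4 := h 4; have h5 := h 5; have h6 := h 6; have h7 := h 7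
  simp [coords] at h0 h1 h2 h3 h4 h5 h6 h7
  ext i
  fin_cases i <;> apply ext_re_im <;> dsimp <;> omega

lemma exists_coords_eq {m : Fin 8 → ℤ} (hm : m ∈ latticeE8) : ∃ x, coords x = m := by
  obtain ⟨hparity, hsum⟩ := mem_latticeE8.1 hm
  rw [Fin.sum_univ_eight] at hsum
  have hmod (i) := hparity i 7
  have hmod0 := hmod 0; have hmod1 := hmod 1; have hmod2 := hmod 2; have hmod3 := hmod 3
  have hmod4 := hmod 4; have hmod5 := hmod 5; have hmod6 := hmod 6
  obtain ⟨a₃, ha₃⟩ : (2 : ℤ) ∣ m 7 - m 6 := by omega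
  obtain ⟨b₃, hb₃⟩ : (2 : ℤ) ∣ m 6 - m 5 := by omega
  obtain ⟨a₂, ha₂⟩ : (2 : ℤ) ∣ m 4 - m 7 - m 6 + m 5 := by omega
  obtain ⟨b₁, hb₁⟩ : (2 : ℤ) ∣ m 3 + m 7 + 2 * a₂ := by omega
  obtain ⟨b₀, hb₀⟩ : (2 : ℤ) ∣ m 2 - m 7 := by omega
  obtain ⟨a₀, ha₀⟩ : (4 : ℤ) ∣ m 0 + m 1 - 2 * b₀ - 2 * b₁ := by omega
  obtain ⟨a₁, ha₁⟩ : (4 : ℤ) ∣ m 1 - m 0 - 2 * b₁ + 2 * b₀ - 2 * m 7 := by omega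
  refine ⟨![a₀ + b₀ * ω, a₁ + b₁ * ω, a₂ + (m 7 : ℤ) * ω, a₃ + b₃ * ω], ?_⟩
  ext j
  fin_cases j <;> simp [coords] <;> omega

lemma qnorm_nonneg (x : Lambda4) : 0 ≤ qnorm x := by
  have h : 0 ≤ ∑ j, coords x j ^ 2 := Finset.sum_nonneg fun j _ => sq_nonneg _
  rw [← eight_mul_qnorm] at h
  omega

lemma eq_zero_of_qnorm_eq_zero {x : Lambda4} (h : qnorm x = 0) : x = 0 := by
  have hsum := eight_mul_qnorm x
  rw [h, mul_zero, eq_comm, Finset.sum_eq_zero_iff_of_nonneg fun j _ => sq_nonneg _] at hsum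
  refine coords_injective (funext fun j => ?_)
  simpa using hsum j (Finset.mem_univ j)

/-- The equality case is that of a deep hole `x / α`. -/
lemma exists_two_mul_qnorm_sub_smul_lt_or_eq (x : Lambda4) {α : O} (hα : α ≠ 0) :
    ∃ w : Lambda4, 2 * qnorm (x - α • w) < norm α ∨
      2 * qnorm (x - α • w) = norm α ∧ ∃ u : Lambda4, (2 : O) • x = α • u := by
  have hn := norm_pos hα
  obtain ⟨m, hm, hcover⟩ := exists_latticeE8_sum_sq_lt_or_eq hn (coords (conj α • x))
  obtain ⟨w, rfl⟩ := exists_coords_eq hm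
  have hscale (z : Lambda4) : conj α • α • z = norm α • z := by
    rw [smul_smul, mul_comm, ← intCast_norm, Int.cast_smul_eq_zsmul]
  have hdist : ∑ j, (coords (conj α • x) j - norm α * coords w j) ^ 2 =
      8 * (norm α * qnorm (x - α • w)) := by
    rw [← norm_conj α, ← qnorm_smul, eight_mul_qnorm, norm_conj, smul_sub, hscale, map_sub,
      map_zsmul]
    simp
  rw [hdist] at hcover
  refine ⟨w, hcover.imp (fun h => ?_) fun ⟨_, m', hm', h2⟩ => ⟨?_, ?_⟩⟩
  · nlinarith
  · exact mul_left_cancel₀ hn.ne' (by linarith)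
  · obtain ⟨u, rfl⟩ := exists_coords_eq hm'
    have hα' : conj α ≠ 0 := fun h => hn.ne' (by rw [← norm_conj, h, norm_zero])
    refine ⟨u, smul_right_injective Lambda4 hα' ?_⟩
    refine coords_injective (funext fun j => ?_)
    dsimp only
    rw [hscale, map_zsmul, smul_comm, ← Nat.cast_ofNat (R := O), Nat.cast_smul_eq_nsmul, map_nsmul]
    simpa using h2 j

/-- The basis vectors of `Λ⁴`. -/
def simpleRoot (i : Fin 4) : Lambda4 := Pi.single i 1

lemma simpleRoot_apply (i j : Fin 4) : simpleRoot i j = if j = i then 1 else 0 :=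
  Pi.single_apply i 1 j

lemma form_simpleRoot_zero (x : Lambda4) : ⟪x, simpleRoot 0⟫ = -θ * x 0 - x 1 := by
  simp [form_eq, simpleRoot]
lemma form_simpleRoot_one (x : Lambda4) : ⟪x, simpleRoot 1⟫ = -θ * x 1 + x 0 - x 2 := by
  simp [form_eq, simpleRoot]
lemma form_simpleRoot_two (x : Lambda4) : ⟪x, simpleRoot 2⟫ = -θ * x 2 + x 1 - x 3 := by
  simp [form_eq, simpleRoot]
lemma form_simpleRoot_three (x : Lambda4) : ⟪x, simpleRoot 3⟫ = -θ * x 3 + x 2 := by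
  simp [form_eq, simpleRoot]

@[simp] lemma qnorm_simpleRoot (i : Fin 4) : qnorm (simpleRoot i) = 1 := by
  fin_cases i <;> simp [qnorm_eq, simpleRoot, norm_eq]

/-- Unimodularity of `ψ / θ` on `Λ⁴`. -/
lemma exists_eq_smul_of_forall_dvd {x : Lambda4} {c : O} (h : ∀ i, c ∣ ⟪x, simpleRoot i⟫) :
    ∃ x', x = c • x' := by
  have h₀ := h 0; have h₁ := h 1; have h₂ := h 2; have h₃ := h 3
  rw [form_simpleRoot_zero] at h₀
  rw [form_simpleRoot_one] at h₁
  rw [form_simpleRoot_two] at h₂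
  rw [form_simpleRoot_three] at h₃
  have hdvd₀ : c ∣ x 0 := by
    convert ((h₃.add (h₀.mul_left θ)).sub (h₁.mul_left 2)).sub (h₂.mul_left θ) using 1
    linear_combination (x 0 - x 2) * θ_mul_θ
  have hdvd₁ : c ∣ x 1 := by
    convert (hdvd₀.mul_left (-θ)).sub h₀ using 1
    ring
  have hdvd₂ : c ∣ x 2 := by
    convert ((hdvd₁.mul_left (-θ)).add hdvd₀).sub h₁ using 1
    ring
  have hdvd₃ : c ∣ x 3 := by
    convert ((hdvd₂.mul_left (-θ)).add hdvd₁).sub h₂ using 1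
    ring
  have hdvd (i : Fin 4) : c ∣ x i := by fin_cases i <;> assumption
  choose x' hx' using hdvd
  exact ⟨x', funext hx'⟩

/-! ### Roots of `Λ⁴` -/

lemma norm_form_eq_one {x s : Lambda4} (hx : qnorm x = 1) (hs : qnorm s = 1)
    (h : modTheta ⟪x, s⟫ ≠ 0) : norm ⟪x, s⟫ = 1 := by
  have hle := norm_form_le_of_qnorm_eq_one qnorm_nonneg x hs
  have hmod := norm_emod_three h
  have hnonneg := norm_nonneg ⟪x, s⟫
  omega

lemma exists_qnorm_sub_theta_smul_le_one (l : Lambda4) : ∃ w, qnorm (l - θ • w) ≤ 1 := by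
  obtain ⟨w, h⟩ := exists_two_mul_qnorm_sub_smul_lt_or_eq l θ_ne_zero
  rw [norm_θ] at h
  exact ⟨w, by omega⟩

lemma exists_qnorm_sub_theta_smul_eq_one {l : Lambda4} (hl : ∀ v, l ≠ θ • v) :
    ∃ w, qnorm (l - θ • w) = 1 := by
  obtain ⟨w, hw⟩ := exists_qnorm_sub_theta_smul_le_one l
  refine ⟨w, hw.antisymm ((qnorm_nonneg _).lt_of_ne' fun h => hl w ?_)⟩
  exact sub_eq_zero.1 (eq_zero_of_qnorm_eq_zero h)

lemma exists_modTheta_form_ne_zero {y : Lambda4} (hy : qnorm y = 1) :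
    ∃ x : Lambda4, modTheta ⟪x, y⟫ ≠ 0 := by
  by_contra! h
  obtain ⟨v, rfl⟩ := exists_eq_smul_of_forall_dvd (x := y) (c := θ) fun i => by
    rw [← modTheta_eq_zero_iff, modTheta_form_swap, h, neg_zero]
  rw [qnorm_smul, norm_θ] at hy
  omega

/-- The lattice is not the union of two proper subgroups. -/
lemma exists_modTheta_form_ne_zero_and {y y' : Lambda4} (hy : qnorm y = 1) (hy' : qnorm y' = 1) :
    ∃ x : Lambda4, modTheta ⟪x, y⟫ ≠ 0 ∧ modTheta ⟪x, y'⟫ ≠ 0 := by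
  obtain ⟨x, hx⟩ := exists_modTheta_form_ne_zero hy
  obtain ⟨x', hx'⟩ := exists_modTheta_form_ne_zero hy'
  by_cases h : modTheta ⟪x, y'⟫ = 0
  · by_cases h' : modTheta ⟪x', y⟫ = 0
    · exact ⟨x + x', by simpa [h'] using hx, by simpa [h] using hx'⟩
    · exact ⟨x', h', hx'⟩
  · exact ⟨x, hx, h⟩

/-- Any two roots are joined through a third one meeting both in a unit. -/
theorem exists_isometry_of_qnorm_eq_one {y y' : Lambda4} (hy : qnorm y = 1) (hy' : qnorm y' = 1) :
    ∃ g ∈ isometryGroup Lambda4, g y = y' := by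
  obtain ⟨l, hl, hl'⟩ := exists_modTheta_form_ne_zero_and hy hy'
  obtain ⟨w, hw⟩ := exists_qnorm_sub_theta_smul_eq_one (l := l) fun v hv => hl (by simp [hv])
  have hmod (z : Lambda4) : modTheta ⟪l - θ • w, z⟫ = modTheta ⟪l, z⟫ := by simp
  obtain ⟨g, hg, rfl⟩ := exists_isometry_of_norm_form_eq_one hw hy'
    (norm_form_eq_one hw hy' (by rwa [hmod]))
  obtain ⟨h, hh, hhy⟩ := exists_isometry_of_norm_form_eq_one hy hw <| by
    rw [norm_form_swap]
    exact norm_form_eq_one hw hy (by rwa [hmod])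
  exact ⟨g * h, mul_mem hg hh, by rw [LinearEquiv.mul_apply, hhy]⟩

lemma exists_root_orthogonal_modTheta_form_ne_zero {l t : Lambda4} (ht : qnorm t = 1)
    (hlt : modTheta ⟪l, t⟫ ≠ 0) :
    ∃ w, qnorm w = 1 ∧ ⟪t, w⟫ = 0 ∧ modTheta ⟪l, w⟫ ≠ 0 := by
  obtain ⟨g, hg, rfl⟩ := exists_isometry_of_qnorm_eq_one (qnorm_simpleRoot 0) ht
  suffices ∃ w, qnorm w = 1 ∧ ⟪simpleRoot 0, w⟫ = 0 ∧ modTheta ⟪g.symm l, w⟫ ≠ 0 by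
    obtain ⟨w, hw, hw0, hlw⟩ := this
    refine ⟨g w, by rwa [qnorm_map hg], by rwa [form_map hg], ?_⟩
    rwa [← g.apply_symm_apply l, form_map hg]
  rw [← g.apply_symm_apply l, form_map hg] at hlt
  by_cases h : modTheta ⟪g.symm l, simpleRoot 2⟫ = 0
  · refine ⟨simpleRoot 0 - θ • simpleRoot 1 - simpleRoot 2, ?_, ?_, ?_⟩
    · simp [qnorm_eq, simpleRoot, norm_eq]
    · simp [form_eq, simpleRoot]
    · simpa [h] using hlt
  · exact ⟨simpleRoot 2, qnorm_simpleRoot 2, by simp [form_eq, simpleRoot], h⟩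

lemma modTheta_form_ne_zero_of_qnorm_add_theta_smul {l t : Lambda4} (ht : qnorm t = 1)
    (h : qnorm (t + θ • l) = 2) : modTheta ⟪l, t⟫ ≠ 0 := fun h0 => by
  have hself := form_self (t + θ • l)
  rw [h] at hself
  simp only [form_add_left, form_add_right, form_smul_left, form_smul_right] at hself
  simp only [form_self, form_swap l t, ht, conj_θ] at hself
  push_cast at hself
  have htrace : ⟪l, t⟫ + conj ⟪l, t⟫ = -1 - θ * (θ * qnorm l) :=
    mul_left_cancel₀ θ_ne_zero (by linear_combination hself)
  have hmod := congrArg modTheta htrace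
  simp [h0] at hmod

/-- Such vectors `u` are the doubles of the deep holes of `Λ⁴`. -/
lemma exists_root_form_eq_theta {u : Lambda4} (hu : qnorm u = 2) :
    ∃ w, qnorm w = 1 ∧ ⟪u, w⟫ = θ := by
  obtain ⟨l, ht⟩ := exists_qnorm_sub_theta_smul_eq_one (l := u) fun v hv => by
    rw [hv, qnorm_smul, norm_θ] at hu
    omega
  obtain ⟨t, rfl⟩ : ∃ t, u = t + θ • l := ⟨u - θ • l, (sub_add_cancel _ _).symm⟩
  rw [add_sub_cancel_right] at ht
  obtain ⟨w, hw, htw, hlw⟩ := exists_root_orthogonal_modTheta_form_ne_zero ht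
    (modTheta_form_ne_zero_of_qnorm_add_theta_smul ht hu)
  have hform : ⟪t + θ • l, w⟫ = θ * ⟪l, w⟫ := by simp [htw]
  have hnorm : norm ⟪l, w⟫ = 1 := by
    have hle := norm_form_le_of_qnorm_eq_one qnorm_nonneg (t + θ • l) hw
    rw [hu, hform, map_mul, norm_θ] at hle
    have hmod := norm_emod_three hlw
    have hnonneg := norm_nonneg ⟪l, w⟫
    omega
  refine ⟨⟪l, w⟫ • w, by rw [qnorm_smul, hnorm, hw, one_mul], ?_⟩
  rw [form_smul_right, hform]
  linear_combination θ * mul_conj_of_norm_eq_one hnorm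

end Lambda4

/-! ### Null vectors of the Lorentzian lattice -/

section Hyperbolic

variable {F : Type*} [AddCommGroup F] [Module O F] [SkewHermitianModule F]

lemma exists_isometry_mul_conj_eq {x : F} {p q : O} (hq : q ≠ 0)
    (h0 : qnorm (x, ((p, q) : HyperbolicPlane)) = 0) :
    ∃ g ∈ isometryGroup (F × HyperbolicPlane), ∃ (p' : O) (c : ℤ),
      g (x, (p, q)) = (x, (p', q)) ∧ p' * conj q = c + qnorm x * ω ∧
      -norm q < 2 * c + qnorm x ∧ 2 * c + qnorm x ≤ norm q := by
  have hn := norm_pos hq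
  have him : im (p * conj q) = qnorm x := by
    simp only [qnorm_prod, qnorm_plane] at h0
    linarith
  set c := re (p * conj q)
  obtain ⟨k, ⟨hlo, hhi⟩, -⟩ :=
    existsUnique_sub_zsmul_mem_Ioc (show 0 < 2 * norm q by omega) (2 * c + qnorm x) (-norm q)
  rw [smul_eq_mul] at hlo hhi
  refine ⟨translation 0 (-k), translation_mem_isometryGroup 0 _, p + q * (-k : ℤ), c - k * norm q,
    translation_zero_apply _ x p q, ?_, by linarith, by linarith⟩
  have hpq := eq_re_add_im (p * conj q)
  rw [him] at hpq
  push_cast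
  linear_combination hpq + (k : O) * intCast_norm q

end Hyperbolic

lemma norm_lt_or_eq_of_mul_conj_eq {p q : O} {c d : ℤ} (hq : q ≠ 0)
    (h : p * conj q = c + d * ω) (hc : -norm q < 2 * c + d) (hc' : 2 * c + d ≤ norm q)
    (hd : 0 ≤ d) (hd' : d ≤ norm q) :
    norm p < norm q ∨ c = 0 ∧ d = norm q := by
  have hn := norm_pos hq
  have hprod : (2 * c + d) ^ 2 + 3 * d ^ 2 = 4 * (norm p * norm q) := by
    rw [← norm_conj q, ← map_mul, h, norm_eq]
    simp only [re_add, re_intCast, re_mul, re_ω, mul_zero, im_intCast, im_ω, mul_one, sub_self,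
      add_zero, im_add, im_mul, zero_add]
    ring
  by_cases hlt : norm p < norm q
  · exact .inl hlt
  have hc_sq : (2 * c + d) ^ 2 ≤ norm q ^ 2 := sq_le_sq' hc.le hc'
  have hd_eq : d = norm q := by nlinarith
  have habs : (2 * c + d) ^ 2 = norm q ^ 2 := by nlinarith
  refine .inr ⟨?_, hd_eq⟩
  rcases sq_eq_sq_iff_eq_or_eq_neg.1 habs with h | h <;> linarith

/-- The lattice `Λ′ ⊥ Λ″ ⊥ H_𝒪` of signature `(9, 1)`. -/
abbrev Lorentzian : Type := (Lambda4 × Lambda4) × HyperbolicPlane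

namespace Lorentzian

/-- The exceptional case of the descent, in which `y / q` is a deep hole of `Λ⁴`. -/
lemma exists_isometry_norm_lt_of_two_smul_eq {y y' u : Lambda4} {p q : O}
    (hq : q ≠ 0) (hp : p * conj q = norm q * ω) (hQy : 2 * qnorm y = norm q)
    (hy : (2 : O) • y = q • u) :
    ∃ g ∈ isometryGroup Lorentzian, ∃ x p',
      g ((y, y'), (p, q)) = (x, (p', q)) ∧ norm p' < norm q := by
  have hu : qnorm u = 2 := by
    have h := congrArg qnorm hy
    simp only [qnorm_smul, norm_ofNat] at h
    exact mul_left_cancel₀ (norm_pos hq).ne' (by push_cast at h; linarith)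
  obtain ⟨w, hw, huw⟩ := Lambda4.exists_root_form_eq_theta hu
  have hyw : 2 * ⟪y, w⟫ = q * θ := by
    rw [← huw, ← form_smul_left, ← form_smul_left, hy]
  have hQw : qnorm (w, (0 : Lambda4)) = 1 := by simp [qnorm_prod, hw]
  refine ⟨translation (w, 0) (-1), translation_mem_isometryGroup _ _, _, _,
    translation_apply _ _ _ _ _, ?_⟩
  set p' := p + q * ((-1 : ℤ) + qnorm (w, (0 : Lambda4)) * ω) - ⟪(y, y'), (w, (0 : Lambda4))⟫
    with hp'_def
  have hp' : 2 * (p' * conj q) = norm q * θ := by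
    rw [hp'_def, hQw, form_prod, form_zero_right, θ_eq]
    rw [θ_eq] at hyw
    push_cast
    linear_combination 2 * hp - conj q * hyw - (2 * (ω - 1) - (2 * ω - 1)) * intCast_norm q
  have hnorm : 4 * norm p' = 3 * norm q := by
    have h := congrArg norm hp'
    simp only [map_mul, norm_conj, norm_θ, norm_intCast, norm_ofNat] at h
    exact mul_left_cancel₀ (norm_pos hq).ne' (by linarith)
  linarith [norm_pos hq]

lemma exists_isometry_norm_lt {v : Lorentzian} (hq : v.2.2 ≠ 0) (h0 : qnorm v = 0) :
    ∃ g ∈ isometryGroup Lorentzian, norm (g v).2.2 < norm v.2.2 := by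
  suffices h : ∃ g ∈ isometryGroup Lorentzian, norm (g v).2.1 < norm v.2.2 by
    obtain ⟨g, hg, hlt⟩ := h
    exact ⟨(LinearEquiv.refl O _).prodCongr planeSwap * g, mul_mem
      (prodCongr_mem_isometryGroup (one_mem _) planeSwap_mem_isometryGroup) hg, hlt⟩
  obtain ⟨⟨x, x'⟩, p₀, q⟩ := v
  dsimp only at hq
  obtain ⟨w, hw⟩ := Lambda4.exists_two_mul_qnorm_sub_smul_lt_or_eq x hq
  obtain ⟨w', hw'⟩ := Lambda4.exists_two_mul_qnorm_sub_smul_lt_or_eq x' hq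
  obtain ⟨p₁, hg₁⟩ : ∃ p₁, translation (-(w, w')) 0 ((x, x'), (p₀, q))
      = ((x - q • w, x' - q • w'), (p₁, q)) :=
    ⟨_, by rw [translation_apply, smul_neg, ← sub_eq_add_neg]; rfl⟩
  have hg₁_mem := translation_mem_isometryGroup (-(w, w')) 0
  obtain ⟨g₂, hg₂_mem, p, c, hg₂, hpq, hc, hc'⟩ := exists_isometry_mul_conj_eq hq
    (by rw [← hg₁, qnorm_map hg₁_mem, h0])
  have hQ := Lambda4.qnorm_nonneg (x - q • w)
  have hQ' := Lambda4.qnorm_nonneg (x' - q • w')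
  have hsum : qnorm (x - q • w, x' - q • w') = qnorm (x - q • w) + qnorm (x' - q • w') :=
    qnorm_prod _
  rcases norm_lt_or_eq_of_mul_conj_eq hq hpq hc hc' (by omega) (by omega) with hlt | ⟨rfl, hd⟩
  · refine ⟨g₂ * translation (-(w, w')) 0, mul_mem hg₂_mem hg₁_mem, ?_⟩
    rwa [LinearEquiv.mul_apply, hg₁, hg₂]
  have hdeep : 2 * qnorm (x - q • w) = norm q := by omega
  obtain ⟨u₀, hu₀⟩ : ∃ u, (2 : O) • x = q • u := (hw.resolve_left hdeep.not_lt).2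
  have hu : (2 : O) • (x - q • w) = q • (u₀ - (2 : O) • w) := by
    rw [smul_sub, hu₀, smul_sub, smul_comm]
  obtain ⟨g₃, hg₃_mem, y, p', hg₃, hlt⟩ := exists_isometry_norm_lt_of_two_smul_eq
    (y' := x' - q • w') hq (by simpa [hd] using hpq) hdeep hu
  refine ⟨g₃ * g₂ * translation (-(w, w')) 0, mul_mem (mul_mem hg₃_mem hg₂_mem) hg₁_mem, ?_⟩
  rwa [LinearEquiv.mul_apply, LinearEquiv.mul_apply, hg₁, hg₂, hg₃]

lemma exists_isometry_eq_of_qnorm_eq_zero {v : Lorentzian} (hv : v ≠ 0) (h0 : qnorm v = 0) :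
    ∃ g ∈ isometryGroup Lorentzian, ∃ p, p ≠ 0 ∧ g v = (0, (p, 0)) := by
  induction hn : (norm v.2.2).toNat using Nat.strong_induction_on generalizing v with
  | _ n ih =>
  rcases eq_or_ne v.2.2 0 with hq | hq
  · obtain ⟨⟨x, x'⟩, p, q⟩ := v
    obtain rfl : q = 0 := hq
    have hx := Lambda4.qnorm_nonneg x
    have hx' := Lambda4.qnorm_nonneg x'
    simp only [qnorm_prod, qnorm_plane, map_zero, mul_zero, im_zero, neg_zero, add_zero] at h0
    obtain rfl := Lambda4.eq_zero_of_qnorm_eq_zero (x := x) (by omega)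
    obtain rfl := Lambda4.eq_zero_of_qnorm_eq_zero (x := x') (by omega)
    exact ⟨1, one_mem _, p, fun hp => hv (by rw [hp]; rfl), rfl⟩
  · obtain ⟨g, hg, hlt⟩ := exists_isometry_norm_lt hq h0
    obtain ⟨g', hg', p, hp, hgp⟩ := ih _ (by have := norm_nonneg (g v).2.2; omega)
      (v := g v) (by simpa using hv) (by rw [qnorm_map hg, h0]) rfl
    exact ⟨g' * g, mul_mem hg' hg, p, hp, hgp⟩

end Lorentzian

/-! ### Pairs consisting of a 6-vector and a root -/

namespace Lambda4

lemma exists_sub_smul_eq_smul {x : Lambda4} {c : O}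
    (h : ∀ w, ⟪simpleRoot 0, w⟫ = 0 → c ∣ ⟪x, w⟫) :
    ∃ (k : O) (x' : Lambda4), x - k • simpleRoot 0 = c • x' := by
  refine ⟨⟪x, simpleRoot 1⟫, exists_eq_smul_of_forall_dvd fun i => ?_⟩
  have hself : ⟪simpleRoot 0, simpleRoot 0⟫ = -θ := by simp [form_self]
  have h01 : ⟪simpleRoot 0, simpleRoot 1⟫ = 1 := by simp [form_simpleRoot_one, simpleRoot_apply]
  fin_cases i
  · simpa [hself, mul_comm] using h (simpleRoot 0 - θ • simpleRoot 1) (by simp [hself, h01])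
  · simp [h01]
  · have h02 : ⟪simpleRoot 0, simpleRoot 2⟫ = 0 := by simp [form_simpleRoot_two, simpleRoot_apply]
    simpa [h02] using h (simpleRoot 2) h02
  · have h03 : ⟪simpleRoot 0, simpleRoot 3⟫ = 0 := by simp [form_simpleRoot_three, simpleRoot_apply]
    simpa [h03] using h (simpleRoot 3) h03

/-- The first basis root of `Λ′`, in `Λ′ ⊥ Λ″`. -/
def sumRoot : Lambda4 × Lambda4 := (simpleRoot 0, 0)

@[simp] lemma qnorm_sumRoot : qnorm sumRoot = 1 := by simp [sumRoot, qnorm_prod]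

lemma form_sumRoot (x : Lambda4 × Lambda4) : ⟪x, sumRoot⟫ = ⟪x.1, simpleRoot 0⟫ := by
  simp [sumRoot, form_prod]

lemma exists_isometry_eq_sumRoot {y : Lambda4 × Lambda4} (hy : qnorm y = 1) :
    ∃ g ∈ isometryGroup (Lambda4 × Lambda4), g y = sumRoot := by
  have main {y : Lambda4} (hy : qnorm y = 1) :
      ∃ g ∈ isometryGroup (Lambda4 × Lambda4), g (y, 0) = sumRoot := by
    obtain ⟨g, hg, hgy⟩ := exists_isometry_of_qnorm_eq_one hy (qnorm_simpleRoot 0)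
    exact ⟨g.prodCongr (.refl O _), prodCongr_mem_isometryGroup hg (one_mem _),
      by simp [hgy, sumRoot]⟩
  obtain ⟨y, y'⟩ := y
  simp only [qnorm_prod] at hy
  have hQ := qnorm_nonneg y
  have hQ' := qnorm_nonneg y'
  rcases (by omega : qnorm y' = 0 ∨ qnorm y = 0) with h | h
  · obtain rfl := eq_zero_of_qnorm_eq_zero h
    exact main (by omega)
  · obtain rfl := eq_zero_of_qnorm_eq_zero h
    obtain ⟨g, hg, hgy⟩ := main (y := y') (by omega)
    exact ⟨g * LinearEquiv.prodComm O _ _, mul_mem hg prodComm_mem_isometryGroup, hgy⟩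

lemma exists_qnorm_eq_two_form_eq {a : O} (ha : norm a < 6) :
    ∃ x : Lambda4 × Lambda4, qnorm x = 2 ∧ ⟪x, sumRoot⟫ = a := by
  obtain ⟨u, c, hu, rfl, hc⟩ := exists_eq_mul_of_norm_lt_six ha
  obtain ⟨x, hx, hxc⟩ : ∃ x : Lambda4 × Lambda4, qnorm x = 2 ∧ ⟪x, sumRoot⟫ = c := by
    simp only [form_sumRoot, qnorm_prod]
    rcases hc with rfl | rfl | rfl | rfl
    · exact ⟨(simpleRoot 2, simpleRoot 0), by simp,
        by simp [form_simpleRoot_zero, simpleRoot_apply]⟩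
    · exact ⟨(-simpleRoot 1, simpleRoot 0), by simp,
        by simp [form_simpleRoot_zero, simpleRoot_apply]⟩
    · exact ⟨(-simpleRoot 0, simpleRoot 0), by simp,
        by simp [form_simpleRoot_zero, simpleRoot_apply]⟩
    · refine ⟨(![θ, 1, 0, 0], 0), by simp [qnorm_eq, norm_eq], ?_⟩
      simp only [form_simpleRoot_zero, Matrix.cons_val]
      linear_combination -θ_mul_θ
  exact ⟨u • x, by simp [hu, hx], by simp [hxc]⟩

end Lambda4

open Lambda4

namespace Lorentzian

/-- The first basis root of `Λ′`, in `Λ′ ⊥ Λ″ ⊥ H_𝒪`. -/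
def stdRoot : Lorentzian := (sumRoot, 0)

@[simp] lemma qnorm_stdRoot : qnorm stdRoot = 1 := by
  rw [stdRoot, qnorm_prod, qnorm_sumRoot, qnorm_zero, add_zero]

@[simp] lemma form_stdRoot (v : Lorentzian) : ⟪v, stdRoot⟫ = ⟪v.1, sumRoot⟫ := by
  simp [stdRoot, form_prod]

/-- The representative of the 6-vectors having pairing `a` with `stdRoot`. -/
def normalForm (a : O) : Lorentzian :=
  ((-(a • simpleRoot 1), 0), ((norm a - 2 : ℤ) * ω, 1))

lemma exists_isometry_eq_stdRoot_of_snd_eq_zero {r : Lorentzian} (hr : qnorm r = 1)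
    (hq : r.2.2 = 0) :
    ∃ g ∈ isometryGroup Lorentzian, g r = stdRoot ∧ ∀ v, v.2.2 = 0 → (g v).2.2 = 0 := by
  obtain ⟨y, p, q⟩ := r
  obtain rfl : q = 0 := hq
  obtain ⟨h, hh, hy⟩ := exists_isometry_eq_sumRoot (y := y) (by
    simpa [qnorm_prod, qnorm_plane] using hr)
  have h01 : ⟪sumRoot, ((simpleRoot 1, 0) : Lambda4 × Lambda4)⟫ = 1 := by
    simp [sumRoot, form_prod, form_simpleRoot_one, simpleRoot_apply]
  refine ⟨translation (conj p • (simpleRoot 1, 0)) 0 * h.prodCongr (.refl O _),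
    mul_mem (translation_mem_isometryGroup _ _) (prodCongr_mem_isometryGroup hh (one_mem _)),
    ?_, fun v hv => hv⟩
  simp only [LinearEquiv.mul_apply, LinearEquiv.prodCongr_apply, hy, LinearEquiv.refl_apply,
    translation_apply, form_smul_right, h01, conj_conj]
  simp [stdRoot]

lemma snd_eq_zero_of_form_eq_zero {e v : Lorentzian} {g : Lorentzian ≃ₗ[O] Lorentzian}
    (hg : g ∈ isometryGroup Lorentzian) {p : O} (hp : p ≠ 0) (he : g e = (0, (p, 0)))
    (h : ⟪e, v⟫ = 0) : (g v).2.2 = 0 := by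
  rw [← form_map hg, he, form_prod, form_zero_left, form_plane, zero_mul, zero_add, sub_zero] at h
  simpa using congrArg conj ((mul_eq_zero.1 h).resolve_left hp)

lemma exists_isometry_eq_stdRoot_of_isotropic {e z r : Lorentzian} (he : e ≠ 0)
    (hee : ⟪e, e⟫ = 0) (hez : ⟪e, z⟫ = 0) (her : ⟪e, r⟫ = 0) (hr : qnorm r = 1) :
    ∃ g ∈ isometryGroup Lorentzian, g r = stdRoot ∧ (g z).2.2 = 0 := by
  obtain ⟨g, hg, p, hp, hge⟩ :=
    exists_isometry_eq_of_qnorm_eq_zero he (qnorm_eq_zero_iff_isotropic.2 hee)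
  obtain ⟨h, hh, hr', hz'⟩ := exists_isometry_eq_stdRoot_of_snd_eq_zero
    ((qnorm_map hg r).trans hr) (snd_eq_zero_of_form_eq_zero hg hp hge her)
  exact ⟨h * g, mul_mem hh hg, hr', hz' _ (snd_eq_zero_of_form_eq_zero hg hp hge hez)⟩

lemma exists_isotropic_of_form_eq {z z₀ r : Lorentzian} (hz : qnorm z = qnorm z₀)
    (hzr : ⟪z, r⟫ = ⟪z₀, r⟫) (hz₀ : z₀.2.2 = 0) (hr : r.2.2 = 0) :
    ∃ e : Lorentzian, e ≠ 0 ∧ ⟪e, e⟫ = 0 ∧ ⟪e, z⟫ = 0 ∧ ⟪e, r⟫ = 0 := by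
  have hform (v : Lorentzian) (hv : v.2.2 = 0) : ⟪((0, (1, 0)) : Lorentzian), v⟫ = 0 := by
    simp [form_prod, form_plane, hv]
  refine exists_isotropic_orthogonal (a := z₀) (by rw [form_self, form_self, hz]) hzr.symm
    (fun h => ?_) (hform _ rfl) (hform _ hz₀) (hform _ hr)
  simpa using congrArg (fun v : Lorentzian => v.2.1) h

lemma exists_isometry_eq_stdRoot {r : Lorentzian} (hr : qnorm r = 1) :
    ∃ g ∈ isometryGroup Lorentzian, g r = stdRoot := by
  obtain ⟨e, he, hee, her, -⟩ := exists_isotropic_of_form_eq (z₀ := stdRoot) (r := 0)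
    (by rw [hr, qnorm_stdRoot]) (by simp) rfl rfl
  obtain ⟨g, hg, hgr, -⟩ := exists_isometry_eq_stdRoot_of_isotropic he hee her her hr
  exact ⟨g, hg, hgr⟩

lemma exists_isometry_snd_eq_zero {z : Lorentzian} (hz : qnorm z = 2)
    (ha : norm ⟪z, stdRoot⟫ < 6) :
    ∃ g ∈ isometryGroup Lorentzian, g stdRoot = stdRoot ∧ (g z).2.2 = 0 := by
  obtain ⟨x, hx, hxa⟩ := exists_qnorm_eq_two_form_eq ha
  obtain ⟨e, he, hee, hez, her⟩ := exists_isotropic_of_form_eq (z := z) (z₀ := (x, 0))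
    (r := stdRoot) (by simp [qnorm_prod, hz, hx]) (by rw [form_stdRoot (x, 0), hxa]) rfl rfl
  exact exists_isometry_eq_stdRoot_of_isotropic he hee hez her qnorm_stdRoot

lemma exists_sub_smul_sumRoot_eq_smul {x : Lambda4 × Lambda4} {c : O}
    (h : ∀ w, ⟪sumRoot, w⟫ = 0 → c ∣ ⟪x, w⟫) :
    ∃ (k : O) (x' : Lambda4 × Lambda4), x - k • sumRoot = c • x' := by
  obtain ⟨k, x₁, hx₁⟩ := exists_sub_smul_eq_smul (x := x.1) (c := c) fun w hw => by
    simpa [form_prod] using h (w, 0) (by simpa [form_prod, sumRoot] using hw)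
  obtain ⟨x₂, hx₂⟩ := exists_eq_smul_of_forall_dvd (x := x.2) (c := c) fun i => by
    simpa [form_prod] using h (0, simpleRoot i) (by simp [form_prod, sumRoot])
  exact ⟨k, (x₁, x₂), by ext1 <;> simp [sumRoot, hx₁, hx₂]⟩

/-- The first coordinate `p` can be changed by any element of the ideal
`{⟪x, w⟫ | ⟪sumRoot, w⟫ = 0}`, whose generator has norm 1 or 3. -/
lemma exists_norm_sub_form_eq_one {x : Lambda4 × Lambda4} {p : O} (hx : qnorm x = 2)
    (ha : norm ⟪x, sumRoot⟫ < 6)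
    (hind : IndepModTheta ((x, (p, 0)) : Lorentzian) stdRoot) :
    ∃ w, ⟪sumRoot, w⟫ = 0 ∧ norm (p - ⟪x, w⟫) = 1 := by
  obtain ⟨c, hc⟩ := exists_dvd_iff_exists_form_eq x sumRoot
  obtain ⟨k, x', hx'⟩ := exists_sub_smul_sumRoot_eq_smul fun w hw => (hc _).2 ⟨w, hw, rfl⟩
  have hnorm : norm c = 1 ∨ norm c = 3 := by
    obtain ⟨t, ht⟩ := norm_dvd_three_mul_qnorm_sub qnorm_sumRoot hx'
    rw [hx] at ht
    have hle : norm c ≤ 6 := (Int.le_of_dvd (by omega) ⟨t, ht⟩).trans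
      (by have := norm_nonneg ⟪x, sumRoot⟫; omega)
    rcases norm_mem_of_le_six hle with h | h | h | h <;> rw [h] at ht <;>
      rcases norm_mem_of_le_six ha.le with h' | h' | h' | h' <;> omega
  obtain ⟨ε, hε, hcε⟩ := exists_norm_eq_one_dvd_sub hnorm (b := p) <| by
    rintro ⟨c', rfl⟩ ⟨p', rfl⟩
    refine hind k (c' • x', (p', 0)) ?_
    simp [stdRoot, hx', smul_smul]
  obtain ⟨w, hw, hwε⟩ := (hc _).1 hcε
  exact ⟨w, hw, by rw [hwε, sub_sub_cancel, hε]⟩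

lemma exists_isometry_eq_normalForm_of_snd_eq_zero {z : Lorentzian} (hz : qnorm z = 2)
    (hq : z.2.2 = 0) (ha : norm ⟪z, stdRoot⟫ < 6) (hind : IndepModTheta z stdRoot) :
    ∃ g ∈ isometryGroup Lorentzian, g stdRoot = stdRoot ∧ g z = normalForm ⟪z, stdRoot⟫ := by
  obtain ⟨x, p, q⟩ := z
  obtain rfl : q = 0 := hq
  rw [form_stdRoot] at ha ⊢
  dsimp only at ha ⊢
  have hx : qnorm x = 2 := by simpa [qnorm_prod, qnorm_plane] using hz
  obtain ⟨w, hw, hε⟩ := exists_norm_sub_form_eq_one hx ha hind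
  set y : Lambda4 × Lambda4 := (-(⟪x, sumRoot⟫ • simpleRoot 1), 0) with hy
  have hyx : ⟪sumRoot, y⟫ = ⟪sumRoot, x⟫ := by
    rw [form_swap y, form_swap x, form_sumRoot y]
    simp [hy, form_simpleRoot_zero, simpleRoot_apply]
  obtain ⟨g, hg, hgr, hgx⟩ := exists_isometry_eq_of_norm_eq_one hε hyx
  refine ⟨g * translation w 0, mul_mem hg (translation_mem_isometryGroup _ _), ?_, ?_⟩
  · simpa [LinearEquiv.mul_apply, stdRoot, ← Prod.mk_zero_zero (M := O), translation_apply, hw]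
      using hgr
  · have hQy : qnorm y = norm ⟪x, sumRoot⟫ := by simp [hy, qnorm_prod]
    rw [hQy, hx] at hgx
    simpa [LinearEquiv.mul_apply, translation_apply, normalForm] using hgx

theorem exists_isometry_eq_normalForm {z r : Lorentzian} (hz : qnorm z = 2) (hr : qnorm r = 1)
    (ha : norm ⟪z, r⟫ < 6) (hind : IndepModTheta z r) :
    ∃ g ∈ isometryGroup Lorentzian, g r = stdRoot ∧ g z = normalForm ⟪z, r⟫ := by
  obtain ⟨g₁, hg₁, hr₁⟩ := exists_isometry_eq_stdRoot hr
  have hind₁ := hind.map g₁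
  rw [← form_map hg₁, hr₁] at ha ⊢
  rw [← qnorm_map hg₁] at hz
  rw [hr₁] at hind₁
  obtain ⟨g₂, hg₂, hr₂, hq₂⟩ := exists_isometry_snd_eq_zero hz ha
  have hind₂ := hind₁.map g₂
  rw [← form_map hg₂, hr₂] at ha ⊢
  rw [← qnorm_map hg₂] at hz
  rw [hr₂] at hind₂
  obtain ⟨g₃, hg₃, hr₃, hz₃⟩ := exists_isometry_eq_normalForm_of_snd_eq_zero hz hq₂ ha hind₂
  exact ⟨g₃ * (g₂ * g₁), mul_mem hg₃ (mul_mem hg₂ hg₁), by simp [LinearEquiv.mul_apply, *], hz₃⟩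

/-- The isometry maps `z` to a multiple of itself rather than to `z`, so that only the norm of the
pairing matters. -/
theorem exists_isometry_eq_smul {z r r' : Lorentzian} (hz : qnorm z = 2) (hr : qnorm r = 1)
    (hr' : qnorm r' = 1) (ha : norm ⟪z, r⟫ < 6) (haa' : norm ⟪z, r'⟫ = norm ⟪z, r⟫)
    (hind : IndepModTheta z r) (hind' : IndepModTheta z r') :
    ∃ g ∈ isometryGroup Lorentzian, g r = r' ∧ ∃ u : O, norm u = 1 ∧ g z = u • z := by
  obtain ⟨u, hu, hua⟩ := exists_eq_mul_of_norm_eq ha haa'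
  have hu' : norm (conj u) = 1 := (norm_conj u).trans hu
  have huz : ⟪conj u • z, r'⟫ = ⟪z, r⟫ := by
    rw [form_smul_left, hua]
    linear_combination ⟪z, r⟫ * mul_conj_of_norm_eq_one hu
  obtain ⟨g, hg, hgr, hgz⟩ := exists_isometry_eq_normalForm hz hr ha hind
  obtain ⟨h, hh, hhr, hhz⟩ := exists_isometry_eq_normalForm (z := conj u • z) (by simp [hu, hz])
    hr' (by rwa [huz]) fun k y hy => hind' (u * k) (u • y) <| by
      rw [smul_comm θ, ← hy, smul_sub, smul_smul, smul_smul, mul_conj_of_norm_eq_one hu, one_smul]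
  rw [huz, ← hgz] at hhz
  rw [← hgr] at hhr
  refine ⟨h⁻¹ * g, mul_mem (inv_mem hh) hg, ?_, conj u, hu', ?_⟩
  · rw [LinearEquiv.mul_apply, ← hhr]; exact h.symm_apply_apply r'
  · rw [LinearEquiv.mul_apply, ← hhz]; exact h.symm_apply_apply _

end Lorentzian

/-! ### Gram determinants of pairs -/

section GramDet

variable {M : Type*} [AddCommGroup M] [Module O M] [SkewHermitianModule M]

/-- The determinant of the Gram matrix of `ψ` on the pair `(x, y)`. -/
def gramDet (x y : M) : ℤ := 9 * (qnorm x * qnorm y) - 3 * norm ⟪x, y⟫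

lemma intCast_gramDet (x y : M) :
    (gramDet x y : O) = θ * ⟪x, x⟫ * (θ * ⟪y, y⟫) - θ * ⟪x, y⟫ * (θ * ⟪y, x⟫) := by
  rw [form_self, form_self, form_swap x y, gramDet]
  push_cast
  rw [intCast_norm]
  linear_combination
    (-(⟪x, y⟫ * conj ⟪x, y⟫) - (θ * θ - 3) * (qnorm x * qnorm y : O)) * θ_mul_θ

@[simp] lemma gramDet_zero_left (y : M) : gramDet 0 y = 0 := by simp [gramDet]
@[simp] lemma gramDet_zero_right (x : M) : gramDet x 0 = 0 := by simp [gramDet]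

lemma gramDet_smul_add_smul (s t s' t' : O) (x y : M) :
    gramDet (s • x + t • y) (s' • x + t' • y) = norm (s * t' - t * s') * gramDet x y := by
  apply intCast_injective
  rw [Int.cast_mul, intCast_norm, intCast_gramDet, intCast_gramDet]
  simp only [form_add_left, form_add_right, form_smul_left, form_smul_right, map_sub, map_mul]
  ring

lemma linearIndependent_of_gramDet_ne_zero {x y : M} (h : gramDet x y ≠ 0) :
    LinearIndependent O ![x, y] := by
  refine LinearIndependent.pair_iff.2 fun s t hst => ⟨?_, ?_⟩
  · simpa [hst, h] using gramDet_smul_add_smul s t 0 1 x y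
  · simpa [hst, h] using gramDet_smul_add_smul 1 0 s t x y

lemma exists_gramDet_eq_mul_of_mem_span {x y x' y' : M} (hx' : x' ∈ Submodule.span O {x, y})
    (hy' : y' ∈ Submodule.span O {x, y}) : ∃ n, 0 ≤ n ∧ gramDet x' y' = n * gramDet x y := by
  obtain ⟨s, t, rfl⟩ := Submodule.mem_span_pair.1 hx'
  obtain ⟨s', t', rfl⟩ := Submodule.mem_span_pair.1 hy'
  exact ⟨_, norm_nonneg _, gramDet_smul_add_smul s t s' t' x y⟩

lemma gramDet_eq_of_span_eq {x y x' y' : M}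
    (h : Submodule.span O {x', y'} = Submodule.span O {x, y}) : gramDet x' y' = gramDet x y := by
  obtain ⟨n, hn, hn'⟩ := exists_gramDet_eq_mul_of_mem_span (x := x) (y := y) (x' := x') (y' := y')
    (h ▸ Submodule.subset_span (by simp)) (h ▸ Submodule.subset_span (by simp))
  obtain ⟨m, -, hm⟩ := exists_gramDet_eq_mul_of_mem_span (x := x') (y := y') (x' := x) (y' := y)
    (h ▸ Submodule.subset_span (by simp)) (h ▸ Submodule.subset_span (by simp))
  rcases eq_or_ne (gramDet x y) 0 with h0 | h0
  · rw [hn', h0, mul_zero]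
  · have hmn : m * n = 1 := by
      rw [hn'] at hm
      exact mul_right_cancel₀ h0 (by linarith)
    rw [hn', Int.eq_one_of_mul_eq_one_left hn hmn, one_mul]

lemma image_form_eq_zero_eq {g : M ≃ₗ[O] M} (hg : g ∈ isometryGroup M) {z : M} {u : O}
    (hu : norm u = 1) (hz : g z = u • z) : g '' {y | ⟪y, z⟫ = 0} = {y | ⟪y, z⟫ = 0} := by
  have hu0 : conj u ≠ 0 := fun h => by
    simpa [hu] using (norm_conj u).symm.trans (congrArg norm h)
  have hpre : {y | ⟪y, z⟫ = 0} = g ⁻¹' {y | ⟪y, z⟫ = 0} := by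
    ext y
    rw [Set.mem_preimage, Set.mem_ofPred_eq, Set.mem_ofPred_eq, ← form_map hg y z, hz,
      form_smul_right, mul_eq_zero, or_iff_right hu0]
  conv_lhs => rw [hpre]
  exact Set.image_preimage_eq _ g.surjective

end GramDet

/-! ### The lattice in coordinates -/

/-- The identification of `Λ` with `Λ′ ⊥ Λ″ ⊥ H_𝒪`. -/
def toLorentzian : (Fin 10 → O) ≃ₗ[O] Lorentzian where
  toFun x := ((![x 0, x 1, x 2, x 3], ![x 4, x 5, x 6, x 7]), (x 8, x 9))
  invFun v :=
    ![v.1.1 0, v.1.1 1, v.1.1 2, v.1.1 3, v.1.2 0, v.1.2 1, v.1.2 2, v.1.2 3, v.2.1, v.2.2]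
  map_add' x y := by simp
  map_smul' a x := by simp
  left_inv x := by ext i; fin_cases i <;> rfl
  right_inv v := by ext i <;> [fin_cases i; fin_cases i; skip; skip] <;> rfl

instance : SkewHermitianModule (Fin 10 → O) where
  form x y := ⟪toLorentzian x, toLorentzian y⟫
  form_add_left x y z := by rw [map_add, form_add_left]
  form_smul_left a x y := by rw [map_smul, form_smul_left]
  form_swap x y := form_swap _ _

lemma form_toLorentzian (x y : Fin 10 → O) : ⟪toLorentzian x, toLorentzian y⟫ = ⟪x, y⟫ := rfl

lemma qnorm_toLorentzian (x : Fin 10 → O) : qnorm (toLorentzian x) = qnorm x := rfl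

lemma psi10_eq (x y : Fin 10 → O) : psi10 x y = θ * ⟪x, y⟫ := by
  rw [← form_toLorentzian, form_prod, form_prod, Lambda4.form_eq, Lambda4.form_eq, form_plane]
  simp only [psi10, Fin.sum_univ_ofNat]
  simp [gram10, toLorentzian]
  linear_combination (x 0 * conj (y 0) + x 1 * conj (y 1) + x 2 * conj (y 2) + x 3 * conj (y 3)
    + x 4 * conj (y 4) + x 5 * conj (y 5) + x 6 * conj (y 6) + x 7 * conj (y 7)) * θ_mul_θ

lemma psi10_self (x : Fin 10 → O) : psi10 x x = (3 * qnorm x : ℤ) := by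
  rw [psi10_eq, form_self]
  push_cast
  linear_combination -(qnorm x : O) * θ_mul_θ

lemma qnorm_eq_of_psi10 {x : Fin 10 → O} {n : ℤ} (h : psi10 x x = (3 * n : ℤ)) : qnorm x = n := by
  have := intCast_injective ((psi10_self x).symm.trans h)
  omega

lemma psi10_eq_zero_iff {x y : Fin 10 → O} : psi10 x y = 0 ↔ ⟪x, y⟫ = 0 := by
  rw [psi10_eq, mul_eq_zero, or_iff_right θ_ne_zero]

lemma isUnitary10_of_mem_isometryGroup {g : (Fin 10 → O) ≃ₗ[O] (Fin 10 → O)}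
    (hg : g ∈ isometryGroup (Fin 10 → O)) : IsUnitary10 g := fun x y => by
  rw [psi10_eq, psi10_eq, form_map hg]

lemma qnorm_pos_of_posDefOn {N : Submodule O (Fin 10 → O)} (hN : PosDefOn N) {x : Fin 10 → O}
    (hx : x ∈ N) (hx0 : x ≠ 0) : 0 < qnorm x := by
  obtain ⟨n, hn, hxn⟩ := hN x hx hx0
  have : 3 * qnorm x = n := intCast_injective (by rw [← psi10_self, hxn, Int.cast_natCast])
  omega

lemma hasDet_Mr_iff {z r : Fin 10 → O} (h : gramDet z r ≠ 0) {d : O} :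
    HasDet (Mr z r) d ↔ d = gramDet z r := by
  simp only [HasDet, Mr, psi10_eq, ← intCast_gramDet]
  constructor
  · rintro ⟨x, y, -, -, hspan, -, rfl⟩
    rw [gramDet_eq_of_span_eq hspan]
  · rintro rfl
    exact ⟨z, r, Submodule.subset_span (by simp), Submodule.subset_span (by simp), rfl,
      linearIndependent_of_gramDet_ne_zero h, rfl⟩

/-! ### Admissible 3-vectors -/

section Admissible

variable {z r r' : Fin 10 → O}

lemma qnorm_eq_one_of_admissible (hr : Admissible z r) : qnorm r = 1 :=
  qnorm_eq_of_psi10 (by rw [hr.1]; norm_num)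

lemma norm_form_lt_six_of_admissible (hz : qnorm z = 2) (hr : Admissible z r) :
    norm ⟪z, r⟫ < 6 := by
  have hr1 := qnorm_eq_one_of_admissible hr
  have hq := qnorm_theta_smul_add_form_smul z hr1
  by_cases h0 : θ • z + ⟪z, r⟫ • r = 0
  · rw [h0, qnorm_zero, hz] at hq
    rcases norm_mem_of_le_six (a := ⟪z, r⟫) (by omega) with h | h | h | h <;> omega
  · have := qnorm_pos_of_posDefOn hr.2.1 (Submodule.mem_span_pair.2 ⟨_, _, rfl⟩) h0
    omega

lemma gramDet_eq_of_admissible (hz : qnorm z = 2) (hr : Admissible z r) :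
    gramDet z r = 18 - 3 * norm ⟪z, r⟫ := by
  rw [gramDet, hz, qnorm_eq_one_of_admissible hr]
  norm_num

lemma gramDet_ne_zero_of_admissible (hz : qnorm z = 2) (hr : Admissible z r) :
    gramDet z r ≠ 0 := by
  have := norm_form_lt_six_of_admissible hz hr
  rw [gramDet_eq_of_admissible hz hr]
  omega

lemma gramDet_mem_of_admissible (hz : qnorm z = 2) (hr : Admissible z r) :
    (gramDet z r : O) ∈ ({6, 9, 15, 18} : Set O) := by
  rw [gramDet_eq_of_admissible hz hr]
  rcases norm_mem_of_le_six (norm_form_lt_six_of_admissible hz hr).le with h | h | h | h <;>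
    rw [h] <;> norm_num

lemma indepModTheta_of_admissible (hz : qnorm z = 2) (hr : Admissible z r) : IndepModTheta z r :=
  indepModTheta_of_linearIndependent
    (linearIndependent_of_gramDet_ne_zero (gramDet_ne_zero_of_admissible hz hr))
    fun y => hr.2.2 θ y θ_ne_zero

theorem exists_isometry_eq_smul_of_admissible (hz : qnorm z = 2) (hr : Admissible z r)
    (hr' : Admissible z r') (hdet : gramDet z r = gramDet z r') :
    ∃ g ∈ isometryGroup (Fin 10 → O), g r = r' ∧ ∃ u : O, norm u = 1 ∧ g z = u • z := by
  rw [gramDet_eq_of_admissible hz hr, gramDet_eq_of_admissible hz hr'] at hdet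
  obtain ⟨g, hg, hgr, u, hu, hgz⟩ := Lorentzian.exists_isometry_eq_smul (z := toLorentzian z)
    ((qnorm_toLorentzian z).trans hz)
    ((qnorm_toLorentzian r).trans (qnorm_eq_one_of_admissible hr))
    ((qnorm_toLorentzian r').trans (qnorm_eq_one_of_admissible hr'))
    (norm_form_lt_six_of_admissible hz hr)
    (by rw [form_toLorentzian, form_toLorentzian]; omega)
    ((indepModTheta_of_admissible hz hr).map _) ((indepModTheta_of_admissible hz hr').map _)
  refine ⟨(toLorentzian.trans g).trans toLorentzian.symm, fun x y => ?_, ?_, u, hu, ?_⟩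
  · simp [← form_toLorentzian, form_map hg]
  · simp [hgr]
  · simp [hgz]

end Admissible

end EisensteinLattice

/-- Let `z_o` be a 6-vector of `Λ` and `Λ_o = z_o^⊥`.  For every
admissible 3-vector `r` the `d`-invariant `d(r)` of `M_r` lies in `{6, 9, 15, 18}`, and
any two admissible 3-vectors with the same `d`-invariant are conjugate under an element
`g ∈ U(Λ)` with `g(Λ_o) = Λ_o`. -/
theorem statement11 (zo : Fin 10 → O) (hzo : psi10 zo zo = 6) :
    (∀ x : Fin 10 → O, Admissible zo x →
      ∃ d ∈ ({6, 9, 15, 18} : Set O), HasDet (Mr zo x) d) ∧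
    (∀ x x' : Fin 10 → O, ∀ d : O,
      Admissible zo x → Admissible zo x' →
      HasDet (Mr zo x) d → HasDet (Mr zo x') d →
      ∃ g : (Fin 10 → O) ≃ₗ[O] (Fin 10 → O), IsUnitary10 g ∧
        g '' {y : Fin 10 → O | psi10 y zo = 0} = {y : Fin 10 → O | psi10 y zo = 0} ∧
        g x = x') := by
  have hz : EisensteinLattice.qnorm zo = 2 :=
    EisensteinLattice.qnorm_eq_of_psi10 (by rw [hzo]; norm_num)
  have hasDet_iff {x : Fin 10 → O} {d : O} (hx : Admissible zo x) :
      HasDet (Mr zo x) d ↔ d = EisensteinLattice.gramDet zo x :=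
    EisensteinLattice.hasDet_Mr_iff (EisensteinLattice.gramDet_ne_zero_of_admissible hz hx)
  refine ⟨fun x hx => ⟨_, EisensteinLattice.gramDet_mem_of_admissible hz hx,
    (hasDet_iff hx).2 rfl⟩, fun x x' d hx hx' hd hd' => ?_⟩
  obtain ⟨g, hg, hgx, u, hu, hgz⟩ := EisensteinLattice.exists_isometry_eq_smul_of_admissible hz
    hx hx' (EisensteinLattice.intCast_injective
      (((hasDet_iff hx).1 hd).symm.trans ((hasDet_iff hx').1 hd')))
  refine ⟨g, EisensteinLattice.isUnitary10_of_mem_isometryGroup hg, ?_, hgx⟩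
  simp only [EisensteinLattice.psi10_eq_zero_iff]
  exact EisensteinLattice.image_form_eq_zero_eq hg hu hgz

end
end
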